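/- arXiv:0810.2570 — 2 statements merged into one kernel-verified Lean document; each statement's English description precedes it below -/
import Mathlib

section
/- Let n = 1 and let Q and Q′ be real normal defining functions of dimension 1, with M′ of finite type at 0 (Q′(z,χ,0) ≢ 0 near 0). Let ℋ = (f,g,f̃,g̃) be an HSPM sending (ℳ,0) into (ℳ′,0) which is totally Segre nondegenerate at 0, i.e. neither z ↦ ∂f/∂z(z,0) nor χ ↦ ∂f̃/∂χ(χ,0) vanishes identically near 0. Then z ↦ f(z,0) and χ ↦ f̃(χ,0) are not identically zero and have the same order of vanishing at 0; that is, if the lowest order nonzero Taylor term of f(z,0) at 0 is c·z^r with c ≠ 0, then the lowest order nonzero Taylor term of f̃(χ,0) at 0 is c̃·χ^r for some c̃ ≠ 0. If in addition Q′ = Q, then ∂f/∂z(0,0) ≠ 0, ∂f̃/∂χ(0,0) ≠ 0 and ∂g/∂w(0,0) ≠ 0; in particular the Jacobian matrices of (f,g) and of (f̃,g̃) at the origin of ℂ² are invertible, so ℋ is a biholomorphism near 0. -/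
open Filter Topology Complex

namespace HSPMpaper

variable {n : ℕ}

/-- Partial derivative of `F` in the `i`-th coordinate direction. -/
noncomputable def pd (i : Fin n) (F : (Fin n → ℂ) → ℂ) : (Fin n → ℂ) → ℂ :=
  fun z => fderiv ℂ F z (Pi.single i 1)

/-- Iterated partial derivative `∂^α` for a multi-index `α`. -/
noncomputable def mpd (α : Fin n → ℕ) (F : (Fin n → ℂ) → ℂ) : (Fin n → ℂ) → ℂ :=
  ((List.ofFn fun i : Fin n => (pd i)^[α i]).foldr (· ∘ ·) id) F

/-- Componentwise complex conjugation on `ℂⁿ`. -/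
def conjV (z : Fin n → ℂ) : Fin n → ℂ := fun i => starRingEnd ℂ (z i)

/-- The conjugate defining function `Q̄(χ,z,τ) = conj (Q (conj χ) (conj z) (conj τ))`. -/
def QBar (Q : (Fin n → ℂ) → (Fin n → ℂ) → ℂ → ℂ) : (Fin n → ℂ) → (Fin n → ℂ) → ℂ → ℂ :=
  fun χ z τ => starRingEnd ℂ (Q (conjV χ) (conjV z) (starRingEnd ℂ τ))

/-- `Q` is a normal defining function (of dimension `n`): holomorphic near the origin of
`ℂⁿ × ℂⁿ × ℂ` and satisfying `Q(0,χ,τ) = τ` and `Q(z,0,τ) = τ` near `0`. -/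
def IsNormalDF (Q : (Fin n → ℂ) → (Fin n → ℂ) → ℂ → ℂ) : Prop :=
  (∀ᶠ p in 𝓝 (0 : (Fin n → ℂ) × (Fin n → ℂ) × ℂ),
      AnalyticAt ℂ (fun q : (Fin n → ℂ) × (Fin n → ℂ) × ℂ => Q q.1 q.2.1 q.2.2) p) ∧
  (∀ᶠ p in 𝓝 (0 : (Fin n → ℂ) × (Fin n → ℂ) × ℂ),
      Q 0 p.2.1 p.2.2 = p.2.2 ∧ Q p.1 0 p.2.2 = p.2.2)

/-- `Q` is a real normal defining function: normal and `Q(z,χ,Q̄(χ,z,w)) = w` near `0`. -/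
def IsRealNormalDF (Q : (Fin n → ℂ) → (Fin n → ℂ) → ℂ → ℂ) : Prop :=
  IsNormalDF Q ∧
  ∀ᶠ p in 𝓝 (0 : (Fin n → ℂ) × (Fin n → ℂ) × ℂ),
    Q p.1 p.2.1 (QBar Q p.2.1 p.1 p.2.2) = p.2.2

/-- `(f,g,f̃,g̃)` is a holomorphic Segre preserving map sending `(ℳ,0)` into `(ℳ',0)`. -/
def IsHSPM (Q Q' : (Fin n → ℂ) → (Fin n → ℂ) → ℂ → ℂ)
    (f : (Fin n → ℂ) → ℂ → Fin n → ℂ) (g : (Fin n → ℂ) → ℂ → ℂ)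
    (ft : (Fin n → ℂ) → ℂ → Fin n → ℂ) (gt : (Fin n → ℂ) → ℂ → ℂ) : Prop :=
  (∀ᶠ p in 𝓝 (0 : (Fin n → ℂ) × ℂ), AnalyticAt ℂ (fun q : (Fin n → ℂ) × ℂ => f q.1 q.2) p) ∧
  (∀ᶠ p in 𝓝 (0 : (Fin n → ℂ) × ℂ), AnalyticAt ℂ (fun q : (Fin n → ℂ) × ℂ => g q.1 q.2) p) ∧
  (∀ᶠ p in 𝓝 (0 : (Fin n → ℂ) × ℂ), AnalyticAt ℂ (fun q : (Fin n → ℂ) × ℂ => ft q.1 q.2) p) ∧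
  (∀ᶠ p in 𝓝 (0 : (Fin n → ℂ) × ℂ), AnalyticAt ℂ (fun q : (Fin n → ℂ) × ℂ => gt q.1 q.2) p) ∧
  f 0 0 = 0 ∧ g 0 0 = 0 ∧ ft 0 0 = 0 ∧ gt 0 0 = 0 ∧
  ∀ᶠ p in 𝓝 (0 : (Fin n → ℂ) × (Fin n → ℂ) × ℂ),
    g p.1 (Q p.1 p.2.1 p.2.2) =
      Q' (f p.1 (Q p.1 p.2.1 p.2.2)) (ft p.2.1 p.2.2) (gt p.2.1 p.2.2)

/-- `M` is of finite type at `0`: `(z,χ) ↦ Q(z,χ,0)` does not vanish identically near `0`. -/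
def FiniteType (Q : (Fin n → ℂ) → (Fin n → ℂ) → ℂ → ℂ) : Prop :=
  ¬ ∀ᶠ p in 𝓝 (0 : (Fin n → ℂ) × (Fin n → ℂ)), Q p.1 p.2 0 = 0

/-- Jacobian matrix of `z ↦ f(z,0)` at `z`. -/
noncomputable def jacz (f : (Fin n → ℂ) → ℂ → Fin n → ℂ) (z : Fin n → ℂ) :
    Matrix (Fin n) (Fin n) ℂ :=
  Matrix.of fun i j => pd j (fun z' => f z' 0 i) z

/-- `ℋ` is Segre transversal to `ℳ'` at `0`: `∂g/∂w(0,0) ≠ 0`. -/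
noncomputable def SegreTransversal (g : (Fin n → ℂ) → ℂ → ℂ) : Prop :=
  deriv (fun w => g 0 w) 0 ≠ 0

/-- `ℋ` is totally Segre nondegenerate at `0`. -/
def TotallySegreNondeg (f ft : (Fin n → ℂ) → ℂ → Fin n → ℂ) : Prop :=
  (¬ ∀ᶠ z in 𝓝 (0 : Fin n → ℂ), (jacz f z).det = 0) ∧
  (¬ ∀ᶠ χ in 𝓝 (0 : Fin n → ℂ), (jacz ft χ).det = 0)

/-- `ℋ` is transversally null: `g ≡ 0` and `g̃ ≡ 0` near `0`. -/
def TransversallyNull (g gt : (Fin n → ℂ) → ℂ → ℂ) : Prop :=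
  (∀ᶠ p in 𝓝 (0 : (Fin n → ℂ) × ℂ), g p.1 p.2 = 0) ∧
  (∀ᶠ p in 𝓝 (0 : (Fin n → ℂ) × ℂ), gt p.1 p.2 = 0)

/-- The `k`-th coordinate direction in `ℂⁿ × ℂ`. -/
noncomputable def dirCT (n : ℕ) (k : Fin (n + 1)) : (Fin n → ℂ) × ℂ :=
  if h : (k : ℕ) < n then (Pi.single ⟨k, h⟩ 1, 0) else (0, 1)

/-- `M` is holomorphically nondegenerate at `0`: for some `K`, the map
`(χ,τ) ↦ (∂_z^α Q(0,χ,τ))_{|α| ≤ K}` has generic rank `n+1`. -/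
def HolNondeg (Q : (Fin n → ℂ) → (Fin n → ℂ) → ℂ → ℂ) : Prop :=
  ∃ K : ℕ, ∃ A : Fin (n + 1) → Fin n → ℕ, (∀ j, (∑ i, A j i) ≤ K) ∧
    ¬ ∀ᶠ p in 𝓝 (0 : (Fin n → ℂ) × ℂ),
      (Matrix.of fun j k : Fin (n + 1) =>
        fderiv ℂ (fun q : (Fin n → ℂ) × ℂ => mpd (A j) (fun z => Q z q.1 q.2) 0) p
          (dirCT n k)).det = 0

/-- `M` is of class `𝒞` at `0`: for some `K`, the map
`χ ↦ (∂_z^α Q(0,χ,0))_{|α| ≤ K}` has generic rank `n`. -/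
def ClassC (Q : (Fin n → ℂ) → (Fin n → ℂ) → ℂ → ℂ) : Prop :=
  ∃ K : ℕ, ∃ A : Fin n → Fin n → ℕ, (∀ j, (∑ i, A j i) ≤ K) ∧
    ¬ ∀ᶠ χ in 𝓝 (0 : Fin n → ℂ),
      (Matrix.of fun j k : Fin n =>
        pd k (fun χ' => mpd (A j) (fun z => Q z χ' 0) 0) χ).det = 0

/-- `M` is finitely nondegenerate at `0`: for some `K`, the vectors
`∂_χ ∂_z^α Q(0,0,0)`, `|α| ≤ K`, span `ℂⁿ`. -/
def FinNondeg (Q : (Fin n → ℂ) → (Fin n → ℂ) → ℂ → ℂ) : Prop :=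
  ∃ K : ℕ, Submodule.span ℂ
    {v : Fin n → ℂ | ∃ α : Fin n → ℕ, (∑ i, α i) ≤ K ∧
      v = fun i => pd i (fun χ => mpd α (fun z => Q z χ 0) 0) 0} = ⊤

/-- Full Jacobian matrix of `(z,w) ↦ (f(z,w), g(z,w))` at `p ∈ ℂⁿ × ℂ`. -/
noncomputable def jacFull (f : (Fin n → ℂ) → ℂ → Fin n → ℂ) (g : (Fin n → ℂ) → ℂ → ℂ)
    (p : (Fin n → ℂ) × ℂ) : Matrix (Fin (n + 1)) (Fin (n + 1)) ℂ :=
  Matrix.of fun i k =>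
    fderiv ℂ (fun q : (Fin n → ℂ) × ℂ => (Fin.snoc (f q.1 q.2) (g q.1 q.2) : Fin (n + 1) → ℂ) i) p (dirCT n k)

/-- The degree-`d` homogeneous term of the Taylor series of `φ` at `0`. -/
noncomputable def homogTerm (d : ℕ) (φ : (Fin n → ℂ) → ℂ) : (Fin n → ℂ) → ℂ :=
  fun z => iteratedFDeriv ℂ d φ 0 (fun _ => z) / (d.factorial : ℂ)

/-- The order of vanishing of `φ` at `0`. -/
noncomputable def vanishOrder (φ : (Fin n → ℂ) → ℂ) : ℕ :=
  sInf {d | homogTerm d φ ≠ 0}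


section Division

variable {E : Type*} [NormedAddCommGroup E] [NormedSpace ℂ E]

/-- The linear map `(x, w) ↦ (x, s w)`. -/
noncomputable def scaleSnd (E : Type*) [NormedAddCommGroup E] [NormedSpace ℂ E] (s : ℂ) :
    E × ℂ →L[ℂ] E × ℂ :=
  (ContinuousLinearMap.fst ℂ E ℂ).prod (s • ContinuousLinearMap.snd ℂ E ℂ)

@[simp]
lemma scaleSnd_apply (s : ℂ) (y : E × ℂ) : scaleSnd E s y = (y.1, s * y.2) := rfl

lemma continuous_scaleSnd : Continuous fun s : ℝ => scaleSnd E (s : ℂ) := by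
  have : (fun s : ℝ => scaleSnd E (s : ℂ)) = fun s : ℝ =>
      (ContinuousLinearMap.inl ℂ E ℂ).comp (ContinuousLinearMap.fst ℂ E ℂ) +
      (s : ℂ) • (ContinuousLinearMap.inr ℂ E ℂ).comp (ContinuousLinearMap.snd ℂ E ℂ) := by
    funext s
    ext y <;> simp [scaleSnd]
  rw [this]
  fun_prop

lemma norm_scaleSnd_apply_le {s : ℝ} (hs : s ∈ Set.uIcc (0 : ℝ) 1) (y : E × ℂ) :
    ‖scaleSnd E (s : ℂ) y‖ ≤ ‖y‖ := by
  rw [Set.uIcc_of_le zero_le_one] at hs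
  simp only [scaleSnd_apply, Prod.norm_def, norm_mul, Complex.norm_real, Real.norm_eq_abs,
    abs_of_nonneg hs.1]
  exact max_le_max le_rfl (mul_le_of_le_one_left (norm_nonneg _) hs.2)

lemma norm_scaleSnd_le {s : ℝ} (hs : s ∈ Set.uIcc (0 : ℝ) 1) : ‖scaleSnd E (s : ℂ)‖ ≤ 1 :=
  ContinuousLinearMap.opNorm_le_bound _ zero_le_one fun y => by
    simpa using norm_scaleSnd_apply_le hs y

lemma analyticAt_integral_scaleSnd {G : E × ℂ → ℂ} (hG : AnalyticAt ℂ G 0) :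
    AnalyticAt ℂ (fun y => ∫ s in (0 : ℝ)..1, G (scaleSnd E (s : ℂ) y)) 0 := by
  obtain ⟨p, R, hp⟩ := hG
  have hcont : ∀ n, Continuous fun s : ℝ =>
      (p n).compContinuousLinearMap fun _ => scaleSnd E (s : ℂ) := fun n =>
    (ContinuousMultilinearMap.compContinuousLinearMapLRight (p n)).cont.comp
      (continuous_pi fun _ => continuous_scaleSnd)
  have hle : ∀ n, ∀ s ∈ Set.uIcc (0 : ℝ) 1,
      ‖(p n).compContinuousLinearMap fun _ => scaleSnd E (s : ℂ)‖ ≤ ‖p n‖ := by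
    intro n s hs
    refine (ContinuousMultilinearMap.norm_compContinuousLinearMap_le _ _).trans ?_
    refine mul_le_of_le_one_right (norm_nonneg _) ?_
    exact Finset.prod_le_one (fun _ _ => norm_nonneg _) fun _ _ => norm_scaleSnd_le hs
  let P : FormalMultilinearSeries ℂ (E × ℂ) ℂ := fun n =>
    ∫ s in (0 : ℝ)..1, (p n).compContinuousLinearMap fun _ => scaleSnd E (s : ℂ)
  have hPle : ∀ n, ‖P n‖ ≤ ‖p n‖ := by
    intro n
    have := intervalIntegral.norm_integral_le_of_norm_le_const (a := 0) (b := 1) (C := ‖p n‖)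
      (fun s hs => hle n s (Set.uIoc_subset_uIcc hs))
    simpa using this
  refine ⟨P, R, ⟨hp.r_le.trans ?_, hp.r_pos, ?_⟩⟩
  · refine ENNReal.le_of_forall_nnreal_lt fun r hr => ?_
    refine P.le_radius_of_summable_norm ?_
    refine (p.summable_norm_mul_pow hr).of_nonneg_of_le (fun n => by positivity) fun n => ?_
    gcongr
    exact hPle n
  · intro y hy
    simp only [zero_add]
    have hPy : ∀ n, P n (fun _ => y) =
        ∫ s in (0 : ℝ)..1, p n (fun _ => scaleSnd E (s : ℂ) y) := by
      intro n
      have := (ContinuousMultilinearMap.apply ℂ (fun _ : Fin n => E × ℂ) ℂ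
        (fun _ => y)).intervalIntegral_comp_comm
        ((hcont n).intervalIntegrable (μ := MeasureTheory.volume) 0 1)
      exact this.symm
    simp only [hPy]
    have hyr : (‖y‖₊ : ENNReal) < p.radius := by
      refine lt_of_lt_of_le ?_ hp.r_le
      simpa [edist_eq_enorm_sub, enorm_eq_nnnorm] using hy
    have hsum : Summable fun n => ‖p n‖ * ‖y‖ ^ n := by
      have h := p.summable_norm_mul_pow hyr
      simpa only [coe_nnnorm] using h
    refine intervalIntegral.hasSum_integral_of_dominated_convergence
      (fun n _ => ‖p n‖ * ‖y‖ ^ n) (fun n => ?_) (fun n => ?_) ?_ ?_ ?_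
    · refine Continuous.aestronglyMeasurable ?_
      exact ((ContinuousMultilinearMap.apply ℂ (fun _ : Fin n => E × ℂ) ℂ
        (fun _ => y)).continuous.comp (hcont n))
    · refine Filter.Eventually.of_forall fun s hs => ?_
      have h1 := ((p n).compContinuousLinearMap fun _ => scaleSnd E (s : ℂ)).le_opNorm
        (fun _ => y)
      simp only [Finset.prod_const, Finset.card_univ, Fintype.card_fin] at h1
      refine h1.trans ?_
      gcongr
      exact hle n s (Set.uIoc_subset_uIcc hs)
    · exact Filter.Eventually.of_forall fun _ _ => hsum
    · exact intervalIntegrable_const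
    · refine Filter.Eventually.of_forall fun s hs => ?_
      have hmem : scaleSnd E (s : ℂ) y ∈ Metric.eball (0 : E × ℂ) R := by
        rw [Metric.mem_eball] at hy ⊢
        refine lt_of_le_of_lt ?_ hy
        simp only [edist_zero_right, enorm_eq_nnnorm, ENNReal.coe_le_coe]
        exact norm_scaleSnd_apply_le (Set.uIoc_subset_uIcc hs) y
      simpa using hp.hasSum hmem

/-- Division by the last variable: an analytic germ `F(x,w)` is `F(x,0) + w H(x,w)`. -/
lemma exists_analyticAt_eq_add_mul {F : E × ℂ → ℂ} (hF : AnalyticAt ℂ F 0) :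
    ∃ H : E × ℂ → ℂ, AnalyticAt ℂ H 0 ∧
      ∀ᶠ p in 𝓝 (0 : E × ℂ), F p = F (p.1, 0) + p.2 * H p := by
  let G : E × ℂ → ℂ := fun y => fderiv ℂ F y (0, 1)
  have hG : AnalyticAt ℂ G 0 := by
    have := hF.fderiv
    exact (ContinuousLinearMap.apply ℂ ℂ ((0 : E), (1 : ℂ))).analyticAt _ |>.comp this
  refine ⟨_, analyticAt_integral_scaleSnd hG, ?_⟩
  obtain ⟨ε, hε, hball⟩ := Metric.eventually_nhds_iff_ball.1
    (hF.eventually_analyticAt.and hG.eventually_analyticAt)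
  filter_upwards [Metric.ball_mem_nhds _ hε] with y hy
  have hmem : ∀ s ∈ Set.uIcc (0 : ℝ) 1, scaleSnd E (s : ℂ) y ∈ Metric.ball (0 : E × ℂ) ε := by
    intro s hs
    rw [mem_ball_zero_iff] at hy ⊢
    exact (norm_scaleSnd_apply_le hs y).trans_lt hy
  have hline : ∀ s : ℝ, HasDerivAt (fun s : ℝ => scaleSnd E (s : ℂ) y) ((0 : E), y.2) s := by
    intro s
    simp only [scaleSnd_apply]
    refine (hasDerivAt_const s y.1).prodMk ?_
    simpa using (Complex.ofRealCLM.hasDerivAt (x := s)).mul_const y.2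
  have hder : ∀ s ∈ Set.uIcc (0 : ℝ) 1,
      HasDerivAt (fun s : ℝ => F (scaleSnd E (s : ℂ) y)) (y.2 * G (scaleSnd E (s : ℂ) y)) s := by
    intro s hs
    have h1 : HasDerivAt (fun s : ℝ => F (scaleSnd E (s : ℂ) y))
        (fderiv ℂ F (scaleSnd E (s : ℂ) y) (0, y.2)) s :=
      HasFDerivAt.comp_hasDerivAt (l := F)
        (l' := (fderiv ℂ F (scaleSnd E (s : ℂ) y)).restrictScalars ℝ) s
        ((hball _ (hmem s hs)).1.differentiableAt.hasFDerivAt.restrictScalars ℝ) (hline s)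
    have : ((0 : E), y.2) = y.2 • ((0 : E), (1 : ℂ)) := by simp
    rwa [this, map_smul, smul_eq_mul] at h1
  have hint : ContinuousOn (fun s : ℝ => y.2 * G (scaleSnd E (s : ℂ) y))
      (Set.uIcc (0 : ℝ) 1) := by
    intro s hs
    refine ContinuousWithinAt.mul continuousWithinAt_const ?_
    exact (ContinuousAt.comp (f := fun s : ℝ => scaleSnd E (s : ℂ) y)
      (hball _ (hmem s hs)).2.continuousAt (hline s).continuousAt).continuousWithinAt
  have := intervalIntegral.integral_eq_sub_of_hasDerivAt hder hint.intervalIntegrable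
  rw [intervalIntegral.integral_const_mul] at this
  rw [this]
  simp

end Division

section Leads

lemma dense_snd_ne_zero (E : Type*) [TopologicalSpace E] : Dense {q : E × ℂ | q.2 ≠ 0} :=
  (dense_compl_singleton (0 : ℂ)).preimage isOpenMap_snd

lemma eventuallyEq_of_pow_mul_eq {E : Type*} [NormedAddCommGroup E] [NormedSpace ℂ E]
    {A B : E × ℂ → ℂ} (hA : AnalyticAt ℂ A 0) (hB : AnalyticAt ℂ B 0) (m : ℕ)
    (h : ∀ᶠ p in 𝓝 (0 : E × ℂ), p.2 ^ m * A p = p.2 ^ m * B p) :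
    ∀ᶠ p in 𝓝 (0 : E × ℂ), A p = B p := by
  filter_upwards [h.eventually_nhds, hA.eventually_analyticAt, hB.eventually_analyticAt]
    with p hp hAp hBp
  refine tendsto_nhds_unique_of_frequently_eq hAp.continuousAt hBp.continuousAt ?_
  have hfr : ∃ᶠ q in 𝓝 p, q.2 ≠ 0 := mem_closure_iff_frequently.1 (dense_snd_ne_zero E p)
  refine (hfr.and_eventually hp).mono fun q hq => ?_
  exact mul_left_cancel₀ (pow_ne_zero _ hq.1) hq.2

lemma eventually_prodMk_zero {E F : Type*} [TopologicalSpace E] [Zero E] [TopologicalSpace F]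
    [Zero F] {P : E × F → Prop} (h : ∀ᶠ p in 𝓝 (0 : E × F), P p) :
    ∀ᶠ x in 𝓝 (0 : E), P (x, 0) :=
  (Continuous.tendsto' (by fun_prop : Continuous fun x : E => (x, (0 : F))) 0 0 rfl).eventually h

lemma eventually_zero_prodMk {E F : Type*} [TopologicalSpace E] [Zero E] [TopologicalSpace F]
    [Zero F] {P : E × F → Prop} (h : ∀ᶠ p in 𝓝 (0 : E × F), P p) :
    ∀ᶠ x in 𝓝 (0 : F), P (0, x) :=
  (Continuous.tendsto' (by fun_prop : Continuous fun x : F => ((0 : E), x)) 0 0 rfl).eventually h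

/-- An analytic germ which is divisible by every power of the last variable vanishes. -/
lemma eventually_eq_zero_of_forall_pow_dvd {F : ℂ × ℂ → ℂ} (hF : AnalyticAt ℂ F 0)
    (h : ∀ t : ℕ, ∃ B : ℂ × ℂ → ℂ, AnalyticAt ℂ B 0 ∧
      ∀ᶠ p in 𝓝 (0 : ℂ × ℂ), F p = p.2 ^ t * B p) :
    ∀ᶠ p in 𝓝 (0 : ℂ × ℂ), F p = 0 := by
  obtain ⟨ε, hε, hball⟩ := Metric.eventually_nhds_iff_ball.1 hF.eventually_analyticAt
  filter_upwards [Metric.ball_mem_nhds _ hε] with y hy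
  let L : ℂ →L[ℂ] ℂ × ℂ := ContinuousLinearMap.toSpanSingleton ℂ y
  have hL : ∀ s, L s = s • y := fun s => rfl
  have hL0 : L 0 = 0 := map_zero L
  have hφ : AnalyticOnNhd ℂ (fun s => F (L s)) (L ⁻¹' Metric.ball 0 ε) := fun s hs =>
    (hball _ hs).comp (L.analyticAt s)
  have h0 : (0 : ℂ) ∈ L ⁻¹' Metric.ball 0 ε := by simpa using hε
  have h1 : (1 : ℂ) ∈ L ⁻¹' Metric.ball 0 ε := by simpa [hL] using hy
  have hconv : IsPreconnected (L ⁻¹' Metric.ball 0 ε) :=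
    ((convex_ball (0 : ℂ × ℂ) ε).is_linear_preimage
      (L.restrictScalars ℝ).toLinearMap.isLinear).isPreconnected
  have hord : ∀ t : ℕ, (t : ℕ∞) ≤ analyticOrderAt (fun s => F (L s)) 0 := by
    intro t
    obtain ⟨B, hB, hFB⟩ := h t
    rw [natCast_le_analyticOrderAt (hφ 0 h0)]
    refine ⟨fun s => y.2 ^ t * B (L s), ?_, ?_⟩
    · exact analyticAt_const.mul ((hL0 ▸ hB : AnalyticAt ℂ B (L 0)).comp (L.analyticAt 0))
    · filter_upwards [(L.continuous.tendsto' 0 0 hL0).eventually hFB] with s hs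
      rw [hs, hL]
      simp only [Prod.smul_snd, smul_eq_mul, sub_zero]
      ring
  have htop : analyticOrderAt (fun s => F (L s)) 0 = ⊤ :=
    ENat.eq_top_iff_forall_ge.2 hord
  have := hφ.eqOn_zero_of_preconnected_of_eventuallyEq_zero hconv h0
    (analyticOrderAt_eq_top.1 htop) h1
  simpa [hL] using this

/-- `F(x,w) = w ^ m B(x,w)` near `0`, where `B(x,0)` vanishes to order exactly `l` at `0`. -/
def HasLead (F : ℂ × ℂ → ℂ) (m l : ℕ) : Prop :=
  ∃ B : ℂ × ℂ → ℂ, AnalyticAt ℂ B 0 ∧ (∀ᶠ p in 𝓝 (0 : ℂ × ℂ), F p = p.2 ^ m * B p) ∧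
    analyticOrderAt (fun x => B (x, 0)) 0 = l

lemma analyticAt_prodMk_zero {B : ℂ × ℂ → ℂ} (hB : AnalyticAt ℂ B 0) :
    AnalyticAt ℂ (fun x : ℂ => B (x, 0)) 0 :=
  AnalyticAt.fun_comp (f := fun x : ℂ => (x, (0 : ℂ))) hB (by fun_prop)

lemma exists_hasLead {F : ℂ × ℂ → ℂ} (hF : AnalyticAt ℂ F 0)
    (h0 : ¬ ∀ᶠ p in 𝓝 (0 : ℂ × ℂ), F p = 0) : ∃ m l, HasLead F m l := by
  by_contra! hno
  refine h0 (eventually_eq_zero_of_forall_pow_dvd hF fun t => ?_)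
  induction t with
  | zero => exact ⟨F, hF, by simp⟩
  | succ t ih =>
    obtain ⟨B, hB, hFB⟩ := ih
    have htop : analyticOrderAt (fun x => B (x, 0)) 0 = ⊤ := by
      by_contra hne
      obtain ⟨l, hl⟩ := ENat.ne_top_iff_exists.1 hne
      exact hno t l ⟨B, hB, hFB, hl.symm⟩
    obtain ⟨H, hH, hBH⟩ := exists_analyticAt_eq_add_mul hB
    refine ⟨H, hH, ?_⟩
    have hz : ∀ᶠ p in 𝓝 (0 : ℂ × ℂ), B (p.1, 0) = 0 :=
      (continuous_fst.tendsto' (0 : ℂ × ℂ) 0 rfl).eventually (analyticOrderAt_eq_top.1 htop)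
    filter_upwards [hFB, hBH, hz] with p h1 h2 h3
    rw [h1, h2, h3]
    ring

lemma HasLead.congr {F G : ℂ × ℂ → ℂ} {m l : ℕ} (h : HasLead F m l)
    (hFG : ∀ᶠ p in 𝓝 (0 : ℂ × ℂ), F p = G p) : HasLead G m l := by
  obtain ⟨B, hB, hFB, hl⟩ := h
  refine ⟨B, hB, ?_, hl⟩
  filter_upwards [hFB, hFG] with p h1 h2
  rw [← h2, h1]

lemma HasLead.not_le {F : ℂ × ℂ → ℂ} {m l t : ℕ} (h : HasLead F m l) (ht : m < t)
    {B : ℂ × ℂ → ℂ} (hB : AnalyticAt ℂ B 0) :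
    ¬ ∀ᶠ p in 𝓝 (0 : ℂ × ℂ), F p = p.2 ^ t * B p := by
  intro hFB
  obtain ⟨A, hA, hFA, hl⟩ := h
  obtain ⟨k, rfl⟩ := Nat.exists_eq_add_of_lt ht
  have hAB : ∀ᶠ p in 𝓝 (0 : ℂ × ℂ), A p = p.2 ^ (k + 1) * B p := by
    refine eventuallyEq_of_pow_mul_eq hA ((analyticAt_snd.pow _).mul hB) m ?_
    filter_upwards [hFA, hFB] with p h1 h2
    rw [← h1, h2]
    ring
  have : analyticOrderAt (fun x => A (x, 0)) 0 = ⊤ := by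
    rw [analyticOrderAt_eq_top]
    filter_upwards [eventually_prodMk_zero hAB] with x hx
    simpa using hx
  rw [hl] at this
  exact ENat.natCast_ne_top l this

lemma HasLead.unique {F : ℂ × ℂ → ℂ} {m l m' l' : ℕ} (h : HasLead F m l)
    (h' : HasLead F m' l') : m = m' ∧ l = l' := by
  have hm : m = m' := by
    rcases lt_trichotomy m m' with hlt | heq | hlt
    · obtain ⟨B, hB, hFB, -⟩ := h'
      exact absurd hFB (h.not_le hlt hB)
    · exact heq
    · obtain ⟨B, hB, hFB, -⟩ := h
      exact absurd hFB (h'.not_le hlt hB)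
  subst hm
  obtain ⟨A, hA, hFA, hl⟩ := h
  obtain ⟨B, hB, hFB, hl'⟩ := h'
  have hAB : ∀ᶠ p in 𝓝 (0 : ℂ × ℂ), A p = B p := by
    refine eventuallyEq_of_pow_mul_eq hA hB m ?_
    filter_upwards [hFA, hFB] with p h1 h2
    rw [← h1, h2]
  have hAB0 : (fun x => A (x, 0)) =ᶠ[𝓝 0] fun x => B (x, 0) := eventually_prodMk_zero hAB
  rw [analyticOrderAt_congr hAB0, hl'] at hl
  exact ⟨rfl, by exact_mod_cast hl.symm⟩

lemma HasLead.not_eventually_eq_zero {F : ℂ × ℂ → ℂ} {m l : ℕ} (h : HasLead F m l) :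
    ¬ ∀ᶠ p in 𝓝 (0 : ℂ × ℂ), F p = 0 := fun h0 =>
  h.not_le (Nat.lt_succ_self m) (B := fun _ => 0) analyticAt_const (by simpa using h0)

/-- If `F(x,0) = 0`, then the first exponent of `F` is positive. -/
lemma HasLead.pos_of_fst {F : ℂ × ℂ → ℂ} {m l : ℕ} (h : HasLead F m l)
    (h0 : ∀ᶠ x in 𝓝 (0 : ℂ), F (x, 0) = 0) : 1 ≤ m := by
  by_contra hm
  obtain rfl : m = 0 := by omega
  obtain ⟨B, hB, hFB, hl⟩ := h
  have : analyticOrderAt (fun x => B (x, 0)) 0 = ⊤ := by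
    rw [analyticOrderAt_eq_top]
    filter_upwards [eventually_prodMk_zero hFB, h0] with x h1 h2
    simpa [h2] using h1.symm
  rw [hl] at this
  exact ENat.natCast_ne_top l this

/-- If `F(0,w) = 0`, then the second exponent of `F` is positive. -/
lemma HasLead.pos_of_snd {F : ℂ × ℂ → ℂ} {m l : ℕ} (h : HasLead F m l)
    (h0 : ∀ᶠ w in 𝓝 (0 : ℂ), F (0, w) = 0) : 1 ≤ l := by
  obtain ⟨B, hB, hFB, hl⟩ := h
  have hB0 : B (0, 0) = 0 := by
    have hc : ContinuousAt (fun w : ℂ => B (0, w)) 0 :=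
      ContinuousAt.comp (f := fun w : ℂ => ((0 : ℂ), w)) hB.continuousAt (by fun_prop)
    have h1 : Tendsto (fun w : ℂ => B (0, w)) (𝓝[≠] 0) (𝓝 (B (0, 0))) :=
      hc.tendsto.mono_left nhdsWithin_le_nhds
    refine tendsto_nhds_unique h1 (tendsto_const_nhds.congr' ?_)
    filter_upwards [nhdsWithin_le_nhds (eventually_zero_prodMk hFB), nhdsWithin_le_nhds h0,
      self_mem_nhdsWithin] with w h1 h2 h3
    rw [h2] at h1
    exact ((mul_eq_zero.1 h1.symm).resolve_left (pow_ne_zero _ h3)).symm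
  have : analyticOrderAt (fun x => B (x, 0)) 0 ≠ 0 :=
    analyticOrderAt_ne_zero.2 ⟨analyticAt_prodMk_zero hB, hB0⟩
  rw [hl] at this
  exact Nat.one_le_iff_ne_zero.2 (by exact_mod_cast this)

lemma HasLead.add {F E : ℂ × ℂ → ℂ} {m l t : ℕ} (h : HasLead F m l) (ht : m < t)
    {H : ℂ × ℂ → ℂ} (hH : AnalyticAt ℂ H 0)
    (hE : ∀ᶠ p in 𝓝 (0 : ℂ × ℂ), E p = p.2 ^ t * H p) :
    HasLead (fun p => F p + E p) m l := by
  obtain ⟨B, hB, hFB, hl⟩ := h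
  obtain ⟨k, rfl⟩ := Nat.exists_eq_add_of_lt ht
  refine ⟨fun p => B p + p.2 ^ (k + 1) * H p, hB.add ((analyticAt_snd.pow _).mul hH), ?_,
    by simpa using hl⟩
  filter_upwards [hFB, hE] with p h1 h2
  rw [h1, h2]
  ring

/-- Leading exponents of a composition `F(a(x,w), b(x,w))`. -/
lemma HasLead.comp {F a b : ℂ × ℂ → ℂ} {m l r s k : ℕ} (h : HasLead F m l)
    (ha : AnalyticAt ℂ a 0) (ha0 : a 0 = 0)
    (hr : analyticOrderAt (fun x => a (x, 0)) 0 = r) (hb : HasLead b s k) (hs : 1 ≤ s) :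
    HasLead (fun p => F (a p, b p)) (s * m) (m * k + r * l) := by
  obtain ⟨B, hB, hFB, hl⟩ := h
  obtain ⟨b₁, hb₁, hbb, hk⟩ := hb
  have hs0 : s ≠ 0 := by omega
  have hbt : b =ᶠ[𝓝 0] fun p => p.2 ^ s * b₁ p := hbb
  have hban : AnalyticAt ℂ b 0 :=
    ((analyticAt_snd.pow s).mul hb₁).congr hbt.symm
  have hb0 : b 0 = 0 := by rw [hbt.self_of_nhds]; simp [hs0]
  have hab : AnalyticAt ℂ (fun p => (a p, b p)) 0 := ha.prod hban
  have hab0 : (a 0, b 0) = (0 : ℂ × ℂ) := by rw [ha0, hb0]; rfl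
  have hBab : AnalyticAt ℂ (fun p => B (a p, b p)) 0 :=
    AnalyticAt.fun_comp (f := fun p => (a p, b p)) (by rw [hab0]; exact hB) hab
  refine ⟨fun p => b₁ p ^ m * B (a p, b p), (hb₁.pow m).mul hBab, ?_, ?_⟩
  · have ht : Tendsto (fun p => (a p, b p)) (𝓝 0) (𝓝 (0 : ℂ × ℂ)) := by
      have := hab.continuousAt.tendsto
      rwa [hab0] at this
    filter_upwards [ht.eventually hFB, hbb] with p h1 h2
    rw [h1]
    simp only [h2]
    ring
  · have hcongr : (fun x => b₁ (x, 0) ^ m * B (a (x, 0), b (x, 0))) =ᶠ[𝓝 (0 : ℂ)]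
        (fun x => b₁ (x, 0)) ^ m * ((fun x => B (x, 0)) ∘ fun x => a (x, 0)) := by
      filter_upwards [eventually_prodMk_zero hbb] with x hx
      simp only [ne_eq, hs0, not_false_eq_true, zero_pow, zero_mul] at hx
      simp [hx]
    have ha' := analyticAt_prodMk_zero ha
    have hB' : AnalyticAt ℂ (fun x => B (x, 0)) ((fun x => a (x, 0)) 0) := by
      have : (fun x => a (x, 0)) 0 = 0 := ha0
      rw [this]
      exact analyticAt_prodMk_zero hB
    have hb₁' := analyticAt_prodMk_zero hb₁
    have ha0' : a (0, 0) = 0 := ha0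
    rw [analyticOrderAt_congr hcongr, analyticOrderAt_mul (hb₁'.pow m)
        (AnalyticAt.comp (f := fun x => a (x, 0)) hB' ha'),
      analyticOrderAt_pow hb₁', hk, hB'.analyticOrderAt_comp ha']
    simp only [ha0', sub_zero, hr, hl]
    push_cast
    rw [nsmul_eq_mul, mul_comm (l : ℕ∞)]

lemma HasLead.mul {F G : ℂ × ℂ → ℂ} {m l m' l' : ℕ} (h : HasLead F m l) (h' : HasLead G m' l') :
    HasLead (fun p => F p * G p) (m + m') (l + l') := by
  obtain ⟨A, hA, hFA, hl⟩ := h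
  obtain ⟨B, hB, hGB, hl'⟩ := h'
  refine ⟨fun p => A p * B p, hA.mul hB, ?_, ?_⟩
  · filter_upwards [hFA, hGB] with p h1 h2
    rw [h1, h2]
    ring
  · have := analyticOrderAt_mul (analyticAt_prodMk_zero hA) (analyticAt_prodMk_zero hB)
    rw [hl, hl'] at this
    exact_mod_cast this

lemma hasLead_zero_zero {u : ℂ × ℂ → ℂ} (hu : AnalyticAt ℂ u 0) (h0 : u 0 ≠ 0) :
    HasLead u 0 0 := by
  refine ⟨u, hu, by simp, ?_⟩
  rw [Nat.cast_zero, (analyticAt_prodMk_zero hu).analyticOrderAt_eq_zero]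
  exact h0

lemma hasLead_comp_snd {φ : ℂ → ℂ} (hφ : AnalyticAt ℂ φ 0) {s : ℕ}
    (hs : analyticOrderAt φ 0 = s) : HasLead (fun p => φ p.2) s 0 := by
  obtain ⟨ψ, hψ, hψ0, h⟩ := hφ.analyticOrderAt_eq_natCast.1 hs
  refine ⟨fun p => ψ p.2, AnalyticAt.fun_comp (f := fun p : ℂ × ℂ => p.2) hψ analyticAt_snd,
    ?_, ?_⟩
  · filter_upwards [(continuous_snd.tendsto' (0 : ℂ × ℂ) 0 rfl).eventually h] with p hp
    simpa using hp
  · rw [Nat.cast_zero, analyticOrderAt_eq_zero]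
    exact Or.inr hψ0

/-- Partial derivative with respect to the last variable. -/
noncomputable def dSnd {E : Type*} [NormedAddCommGroup E] [NormedSpace ℂ E] (F : E × ℂ → ℂ) :
    E × ℂ → ℂ := fun y => fderiv ℂ F y (0, 1)

/-- Partial derivative with respect to the first variable. -/
noncomputable def dFst (F : ℂ × ℂ → ℂ) : ℂ × ℂ → ℂ := fun y => fderiv ℂ F y (1, 0)

lemma analyticAt_dSnd {E : Type*} [NormedAddCommGroup E] [NormedSpace ℂ E] {F : E × ℂ → ℂ}
    {y : E × ℂ} (hF : AnalyticAt ℂ F y) : AnalyticAt ℂ (dSnd F) y :=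
  ((ContinuousLinearMap.apply ℂ ℂ ((0 : E), (1 : ℂ))).analyticAt _).comp hF.fderiv

lemma analyticAt_dFst {F : ℂ × ℂ → ℂ} {y : ℂ × ℂ} (hF : AnalyticAt ℂ F y) :
    AnalyticAt ℂ (dFst F) y :=
  ((ContinuousLinearMap.apply ℂ ℂ ((1 : ℂ), (0 : ℂ))).analyticAt _).comp hF.fderiv

lemma fderiv_apply_eq (F : ℂ × ℂ → ℂ) (y : ℂ × ℂ) (u v : ℂ) :
    fderiv ℂ F y (u, v) = dFst F y * u + dSnd F y * v := by
  have : (u, v) = u • ((1 : ℂ), (0 : ℂ)) + v • ((0 : ℂ), (1 : ℂ)) := by simp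
  rw [this, map_add, map_smul, map_smul, dFst, dSnd, smul_eq_mul, smul_eq_mul]
  ring

lemma hasDerivAt_dSnd {E : Type*} [NormedAddCommGroup E] [NormedSpace ℂ E] {F : E × ℂ → ℂ}
    {y : E × ℂ} (hF : AnalyticAt ℂ F y) :
    HasDerivAt (fun w => F (y.1, w)) (dSnd F y) y.2 :=
  HasFDerivAt.comp_hasDerivAt (l := F) (f := fun w => (y.1, w)) y.2
    hF.differentiableAt.hasFDerivAt ((hasDerivAt_const y.2 y.1).prodMk (hasDerivAt_id y.2))

lemma hasDerivAt_dFst {F : ℂ × ℂ → ℂ} {y : ℂ × ℂ} (hF : AnalyticAt ℂ F y) :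
    HasDerivAt (fun z => F (z, y.2)) (dFst F y) y.1 :=
  HasFDerivAt.comp_hasDerivAt (l := F) (f := fun z => (z, y.2)) y.1
    hF.differentiableAt.hasFDerivAt ((hasDerivAt_id y.1).prodMk (hasDerivAt_const y.1 y.2))

lemma HasLead.dSnd {F : ℂ × ℂ → ℂ} {m l : ℕ} (h : HasLead F (m + 1) l) :
    HasLead (dSnd F) m l := by
  obtain ⟨B, hB, hFB, hl⟩ := h
  refine ⟨fun p => (m + 1) * B p + p.2 * HSPMpaper.dSnd B p,
    (analyticAt_const.mul hB).add (analyticAt_snd.mul (analyticAt_dSnd hB)), ?_, ?_⟩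
  · filter_upwards [hFB.eventually_nhds, hB.eventually_analyticAt] with p hp hBp
    have hFp : AnalyticAt ℂ F p :=
      ((analyticAt_snd.pow (m + 1)).mul hBp).congr (EventuallyEq.symm hp)
    have h1 := ((hasDerivAt_pow (m + 1) p.2).mul (hasDerivAt_dSnd hBp))
    have h2 : (fun w => F (p.1, w)) =ᶠ[𝓝 p.2] (fun w => w ^ (m + 1)) * fun w => B (p.1, w) :=
      (Continuous.tendsto' (by fun_prop : Continuous fun w : ℂ => (p.1, w)) p.2 p rfl).eventually
        hp
    rw [(hasDerivAt_dSnd hFp).unique (h1.congr_of_eventuallyEq h2)]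
    simp only [Prod.mk.eta, add_tsub_cancel_right]
    push_cast
    ring
  · have hne : ((m : ℂ) + 1) ≠ 0 := by exact_mod_cast Nat.succ_ne_zero m
    have := analyticOrderAt_mul (f := fun _ : ℂ => (m : ℂ) + 1) (z₀ := 0) analyticAt_const
      (analyticAt_prodMk_zero hB)
    have hz : analyticOrderAt (fun _ : ℂ => (m : ℂ) + 1) 0 = 0 :=
      analyticOrderAt_eq_zero.2 (Or.inr hne)
    rw [hl, hz, zero_add] at this
    simpa [Pi.mul_def] using this

lemma HasLead.exists_dFst_eq {F : ℂ × ℂ → ℂ} {m l : ℕ} (h : HasLead F m l) :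
    ∃ C : ℂ × ℂ → ℂ, AnalyticAt ℂ C 0 ∧ ∀ᶠ p in 𝓝 (0 : ℂ × ℂ), dFst F p = p.2 ^ m * C p := by
  obtain ⟨B, hB, hFB, -⟩ := h
  refine ⟨dFst B, analyticAt_dFst hB, ?_⟩
  filter_upwards [hFB.eventually_nhds, hB.eventually_analyticAt] with p hp hBp
  have hFp : AnalyticAt ℂ F p :=
    ((analyticAt_snd.pow m).mul hBp).congr (EventuallyEq.symm hp)
  have h1 := (hasDerivAt_dFst hBp).const_mul (p.2 ^ m)
  have h2 : (fun z => F (z, p.2)) =ᶠ[𝓝 p.1] fun z => p.2 ^ m * B (z, p.2) :=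
    (Continuous.tendsto' (by fun_prop : Continuous fun z : ℂ => (z, p.2)) p.1 p rfl).eventually
      hp
  exact (hasDerivAt_dFst hFp).unique (h1.congr_of_eventuallyEq h2)

end Leads

section SegreMaps

/-- Scalar version of a normal defining function, as a germ in `((z, χ), τ)`. -/
structure NormalGerm (Q : (ℂ × ℂ) × ℂ → ℂ) : Prop where
  analyticAt : AnalyticAt ℂ Q 0
  fst_zero : ∀ᶠ p in 𝓝 (0 : ℂ × ℂ), Q ((0, p.1), p.2) = p.2
  snd_zero : ∀ᶠ p in 𝓝 (0 : ℂ × ℂ), Q ((p.1, 0), p.2) = p.2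

/-- Two normal germs `Q`, `Qb` that define the same complexified hypersurface, solved for `w` and
for `τ` respectively. -/
structure SegrePair (Q Qb : (ℂ × ℂ) × ℂ → ℂ) : Prop where
  left : NormalGerm Q
  right : NormalGerm Qb
  inv_left : ∀ᶠ p in 𝓝 (0 : (ℂ × ℂ) × ℂ), Q (p.1.swap, Qb p) = p.2
  inv_right : ∀ᶠ p in 𝓝 (0 : (ℂ × ℂ) × ℂ), Qb (p.1.swap, Q p) = p.2

/-- Scalar version of a holomorphic Segre preserving map. -/
structure SegreMap (Q Q' : (ℂ × ℂ) × ℂ → ℂ) (f g ft gt : ℂ × ℂ → ℂ) : Prop where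
  f_an : AnalyticAt ℂ f 0
  g_an : AnalyticAt ℂ g 0
  ft_an : AnalyticAt ℂ ft 0
  gt_an : AnalyticAt ℂ gt 0
  f_zero : f 0 = 0
  g_zero : g 0 = 0
  ft_zero : ft 0 = 0
  gt_zero : gt 0 = 0
  map : ∀ᶠ p in 𝓝 (0 : (ℂ × ℂ) × ℂ),
    g (p.1.1, Q p) = Q' ((f (p.1.1, Q p), ft (p.1.2, p.2)), gt (p.1.2, p.2))

variable {Q Qb Q' Qb' : (ℂ × ℂ) × ℂ → ℂ} {f g ft gt : ℂ × ℂ → ℂ}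

lemma tendsto_of_continuousAt {X Y : Type*} [TopologicalSpace X] [TopologicalSpace Y] {F : X → Y}
    {x : X} {y : Y} (h : ContinuousAt F x) (hy : F x = y) : Tendsto F (𝓝 x) (𝓝 y) := hy ▸ h

lemma NormalGerm.apply_zero (h : NormalGerm Q) : Q 0 = 0 := h.fst_zero.self_of_nhds

lemma NormalGerm.eventually_fst (h : NormalGerm Q) : ∀ᶠ z in 𝓝 (0 : ℂ), Q ((z, 0), 0) = 0 :=
  eventually_prodMk_zero h.snd_zero

lemma NormalGerm.eventually_snd (h : NormalGerm Q) : ∀ᶠ χ in 𝓝 (0 : ℂ), Q ((0, χ), 0) = 0 :=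
  eventually_prodMk_zero h.fst_zero

lemma NormalGerm.analyticAt_slice (h : NormalGerm Q) :
    AnalyticAt ℂ (fun p : ℂ × ℂ => Q (p, 0)) 0 :=
  AnalyticAt.fun_comp (f := fun p : ℂ × ℂ => (p, (0 : ℂ))) h.analyticAt (by fun_prop)

lemma SegrePair.symm (h : SegrePair Q Qb) : SegrePair Qb Q :=
  ⟨h.right, h.left, h.inv_right, h.inv_left⟩

lemma SegreMap.symm (h : SegreMap Q Q' f g ft gt) (hQ : SegrePair Q Qb)
    (hQ' : SegrePair Q' Qb') : SegreMap Qb Qb' ft gt f g where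
  f_an := h.ft_an
  g_an := h.gt_an
  ft_an := h.f_an
  gt_an := h.g_an
  f_zero := h.ft_zero
  g_zero := h.gt_zero
  ft_zero := h.f_zero
  gt_zero := h.g_zero
  map := by
    have hQb := hQ.right.analyticAt.continuousAt
    have hQb0 := hQ.right.apply_zero
    have h1 : Tendsto (fun p : (ℂ × ℂ) × ℂ => (p.1.swap, Qb p)) (𝓝 0) (𝓝 0) :=
      tendsto_of_continuousAt (by fun_prop) (by rw [hQb0]; rfl)
    have hτ : Tendsto (fun p : (ℂ × ℂ) × ℂ => (p.1.1, Qb p)) (𝓝 0) (𝓝 0) :=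
      tendsto_of_continuousAt (by fun_prop) (by rw [hQb0]; rfl)
    have hw : Tendsto (fun p : (ℂ × ℂ) × ℂ => (p.1.2, p.2)) (𝓝 0) (𝓝 0) :=
      tendsto_of_continuousAt (by fun_prop) rfl
    have h2 : Tendsto (fun p : (ℂ × ℂ) × ℂ =>
        ((f (p.1.2, p.2), ft (p.1.1, Qb p)), gt (p.1.1, Qb p))) (𝓝 0) (𝓝 0) :=
      (((tendsto_of_continuousAt h.f_an.continuousAt h.f_zero).comp hw).prodMk_nhds
        ((tendsto_of_continuousAt h.ft_an.continuousAt h.ft_zero).comp hτ)).prodMk_nhds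
        ((tendsto_of_continuousAt h.gt_an.continuousAt h.gt_zero).comp hτ)
    filter_upwards [h1.eventually h.map, h2.eventually hQ'.inv_right, hQ.inv_left]
      with p e1 e2 e3
    simp only [Prod.fst_swap, Prod.snd_swap, Prod.swap_prod_mk, e3] at e1 e2
    rw [e1, e2]

lemma SegreMap.g_eventually_zero (h : SegreMap Q Q' f g ft gt) (hQ : NormalGerm Q)
    (hQ' : NormalGerm Q') : ∀ᶠ z in 𝓝 (0 : ℂ), g (z, 0) = 0 := by
  have hf : Tendsto (fun z : ℂ => f (z, 0)) (𝓝 0) (𝓝 0) :=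
    tendsto_of_continuousAt (analyticAt_prodMk_zero h.f_an).continuousAt h.f_zero
  have h1 := eventually_prodMk_zero (eventually_prodMk_zero h.map)
  filter_upwards [h1, hQ.eventually_fst, hf.eventually hQ'.eventually_fst] with z e1 e2 e3
  have e4 : ft (0, 0) = 0 := h.ft_zero
  have e5 : gt (0, 0) = 0 := h.gt_zero
  simpa only [e2, e4, e5, e3] using e1

lemma SegreMap.slice (h : SegreMap Q Q' f g ft gt)
    (hgt : ∀ᶠ χ in 𝓝 (0 : ℂ), gt (χ, 0) = 0) :
    ∀ᶠ p in 𝓝 (0 : ℂ × ℂ),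
      g (p.1, Q (p, 0)) = Q' ((f (p.1, Q (p, 0)), ft (p.2, 0)), 0) := by
  filter_upwards [eventually_prodMk_zero h.map,
    (continuous_snd.tendsto' (0 : ℂ × ℂ) 0 rfl).eventually hgt] with p e1 e2
  simpa only [e2] using e1

lemma NormalGerm.analyticAt_fst_slice (hQ : NormalGerm Q) (hf : AnalyticAt ℂ f 0) :
    AnalyticAt ℂ (fun p : ℂ × ℂ => f (p.1, Q (p, 0))) 0 :=
  AnalyticAt.fun_comp (f := fun p : ℂ × ℂ => (p.1, Q (p, 0)))
    (by
      have h0 : ((0 : ℂ × ℂ).1, Q ((0 : ℂ × ℂ), 0)) = 0 := by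
        rw [show Q (0, 0) = 0 from hQ.apply_zero]
        rfl
      rw [h0]
      exact hf)
    (analyticAt_fst.prod hQ.analyticAt_slice)

lemma NormalGerm.fst_slice_zero (hQ : NormalGerm Q) :
    f ((0 : ℂ × ℂ).1, Q ((0 : ℂ × ℂ), 0)) = f 0 := by
  rw [show Q (0, 0) = 0 from hQ.apply_zero]
  rfl

lemma NormalGerm.order_fst_slice (hQ : NormalGerm Q) :
    analyticOrderAt (fun x => f (((x, 0) : ℂ × ℂ).1, Q ((x, 0), 0))) 0 =
      analyticOrderAt (fun x => f (x, 0)) 0 := by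
  refine analyticOrderAt_congr ?_
  filter_upwards [hQ.eventually_fst] with x hx
  simp [hx]

lemma one_le_order {φ : ℂ → ℂ} (hφ : AnalyticAt ℂ φ 0) (h0 : φ 0 = 0) {r : ℕ}
    (hr : analyticOrderAt φ 0 = r) : 1 ≤ r := by
  have := analyticOrderAt_ne_zero.2 ⟨hφ, h0⟩
  rw [hr] at this
  exact Nat.one_le_iff_ne_zero.2 (by exact_mod_cast this)

lemma SegreMap.hasLead_slice (h : SegreMap Q Q' f g ft gt) (hQ : NormalGerm Q)
    (hgt : ∀ᶠ χ in 𝓝 (0 : ℂ), gt (χ, 0) = 0) {r s m' l' : ℕ}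
    (hr : analyticOrderAt (fun z => f (z, 0)) 0 = r)
    (hs : analyticOrderAt (fun χ => ft (χ, 0)) 0 = s)
    (hq' : HasLead (fun p => Q' (p, 0)) m' l') :
    HasLead (fun p => g (p.1, Q (p, 0))) (s * m') (r * l') := by
  have hs1 : 1 ≤ s := one_le_order (analyticAt_prodMk_zero h.ft_an) h.ft_zero hs
  have := hq'.comp (hQ.analyticAt_fst_slice h.f_an) (hQ.fst_slice_zero.trans h.f_zero)
    (hQ.order_fst_slice.trans hr) (hasLead_comp_snd (analyticAt_prodMk_zero h.ft_an) hs) hs1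
  rw [mul_zero, zero_add] at this
  exact this.congr ((h.slice hgt).mono fun p hp => hp.symm)

lemma hasLead_comp_slice {m l t c : ℕ} (hQ : NormalGerm Q)
    (hq : HasLead (fun p => Q (p, 0)) m l) (hg : HasLead g t c) :
    HasLead (fun p => g (p.1, Q (p, 0))) (m * t) (t * l + c) := by
  have := hg.comp (a := fun p : ℂ × ℂ => p.1) (r := 1) analyticAt_fst rfl
    (by rw [Nat.cast_one]; exact analyticOrderAt_id) hq (hq.pos_of_fst hQ.eventually_fst)
  rwa [one_mul] at this

/-- Comparison of the exponents of `g` and `g̃`. -/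
lemma SegreMap.transversal_order_le (h : SegreMap Q Q' f g ft gt) (hQ : NormalGerm Q)
    (hQ' : NormalGerm Q') {r m' l' t c t' c' : ℕ}
    (hr : analyticOrderAt (fun z => f (z, 0)) 0 = r)
    (hq' : HasLead (fun p => Q' (p, 0)) m' l') (hg : HasLead g t c) (hgt : HasLead gt t' c')
    (hc : c ≠ r * l') : t' ≤ t := by
  by_contra! hlt
  obtain ⟨H, hH, hQH⟩ := exists_analyticAt_eq_add_mul hQ'.analyticAt
  obtain ⟨γ, hγ, hgγ, -⟩ := hgt
  have hft0 : AnalyticAt ℂ (fun τ : ℂ => ft (0, τ)) 0 :=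
    AnalyticAt.fun_comp (f := fun τ : ℂ => ((0 : ℂ), τ)) h.ft_an (by fun_prop)
  have h0snd : AnalyticAt ℂ (fun p : ℂ × ℂ => ((0 : ℂ), p.2)) 0 :=
    analyticAt_const.prod analyticAt_snd
  have hγ0 : AnalyticAt ℂ (fun p : ℂ × ℂ => γ (0, p.2)) 0 :=
    AnalyticAt.fun_comp (f := fun p : ℂ × ℂ => ((0 : ℂ), p.2)) hγ h0snd
  have hft2 : AnalyticAt ℂ (fun p : ℂ × ℂ => ft (0, p.2)) 0 :=
    AnalyticAt.fun_comp (f := fun p : ℂ × ℂ => ((0 : ℂ), p.2)) h.ft_an h0snd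
  have hgt2 : AnalyticAt ℂ (fun p : ℂ × ℂ => gt (0, p.2)) 0 :=
    AnalyticAt.fun_comp (f := fun p : ℂ × ℂ => ((0 : ℂ), p.2)) h.gt_an h0snd
  have harg : AnalyticAt ℂ (fun p : ℂ × ℂ => ((f p, ft (0, p.2)), gt (0, p.2))) 0 :=
    (h.f_an.prod hft2).prod hgt2
  have harg0 : ((f 0, ft (0, (0 : ℂ × ℂ).2)), gt (0, (0 : ℂ × ℂ).2)) = (0 : (ℂ × ℂ) × ℂ) := by
    rw [h.f_zero, show ft (0, (0 : ℂ × ℂ).2) = 0 from h.ft_zero,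
      show gt (0, (0 : ℂ × ℂ).2) = 0 from h.gt_zero]
    rfl
  have hHarg : AnalyticAt ℂ (fun p : ℂ × ℂ => H ((f p, ft (0, p.2)), gt (0, p.2))) 0 :=
    AnalyticAt.fun_comp (f := fun p : ℂ × ℂ => ((f p, ft (0, p.2)), gt (0, p.2)))
      (by rw [harg0]; exact hH) harg
  have hN : HasLead (fun p => Q' ((f p, ft (0, p.2)), 0)) t c := by
    refine (hg.add (E := fun p => -(gt (0, p.2) * H ((f p, ft (0, p.2)), gt (0, p.2)))) hlt
      (H := fun p => -(γ (0, p.2) * H ((f p, ft (0, p.2)), gt (0, p.2)))) (hγ0.mul hHarg).neg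
      ?_).congr ?_
    · filter_upwards [(tendsto_of_continuousAt h0snd.continuousAt rfl).eventually hgγ] with p hp
      rw [hp]
      ring
    · have hemb : Tendsto (fun p : ℂ × ℂ => ((p.1, (0 : ℂ)), p.2)) (𝓝 0) (𝓝 0) :=
        tendsto_of_continuousAt (by fun_prop) rfl
      filter_upwards [hemb.eventually h.map, hQ.snd_zero,
        (tendsto_of_continuousAt harg.continuousAt harg0).eventually hQH] with p e1 e2 e3
      simp only [e2] at e1
      rw [e1, e3]
      ring
  by_cases hft : analyticOrderAt (fun τ : ℂ => ft (0, τ)) 0 = ⊤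
  · refine hN.not_eventually_eq_zero ?_
    filter_upwards [(continuous_snd.tendsto' (0 : ℂ × ℂ) 0 rfl).eventually
      (analyticOrderAt_eq_top.1 hft), (tendsto_of_continuousAt h.f_an.continuousAt
      h.f_zero).eventually hQ'.eventually_fst] with p e1 e2
    simp only [e1, e2]
  · obtain ⟨e, he⟩ := ENat.ne_top_iff_exists.1 hft
    have he1 : 1 ≤ e := one_le_order hft0 h.ft_zero he.symm
    have := hq'.comp h.f_an h.f_zero hr (hasLead_comp_snd hft0 he.symm) he1
    rw [mul_zero, zero_add] at this
    exact hc (hN.unique this).2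

end SegreMaps

section SelfMaps

variable {Q : (ℂ × ℂ) × ℂ → ℂ} {f g ft gt : ℂ × ℂ → ℂ}

lemma HasLead.eventually_fst_eq_zero {F : ℂ × ℂ → ℂ} {m l : ℕ} (h : HasLead F m l)
    (hm : m ≠ 0) : ∀ᶠ x in 𝓝 (0 : ℂ), F (x, 0) = 0 := by
  obtain ⟨B, -, hFB, -⟩ := h
  filter_upwards [eventually_prodMk_zero hFB] with x hx
  rw [hx]
  simp [hm]

lemma fderiv_prodMk_zero {F : (ℂ × ℂ) × ℂ → ℂ} {y : ℂ × ℂ} (hF : AnalyticAt ℂ F (y, 0))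
    (v : ℂ × ℂ) : fderiv ℂ F (y, 0) (v, 0) = fderiv ℂ (fun p => F (p, 0)) y v := by
  have h := HasFDerivAt.comp y (g := F) (f := fun p : ℂ × ℂ => (p, (0 : ℂ)))
    hF.differentiableAt.hasFDerivAt ((hasFDerivAt_id y).prodMk (hasFDerivAt_const (0 : ℂ) y))
  have h' := h.fderiv
  simp only [Function.comp_def] at h'
  rw [h']
  simp

/-- The map identity differentiated with respect to `τ` along `τ = 0`. -/
lemma SegreMap.deriv_slice (h : SegreMap Q Q f g ft gt) (hQ : NormalGerm Q)
    (hgt : ∀ᶠ χ in 𝓝 (0 : ℂ), gt (χ, 0) = 0)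
    (hgt' : ∀ᶠ χ in 𝓝 (0 : ℂ), dSnd gt (χ, 0) = 0) :
    ∀ᶠ p in 𝓝 (0 : ℂ × ℂ),
      dSnd g (p.1, Q (p, 0)) * dSnd Q (p, 0) =
        dFst (fun p => Q (p, 0)) (f (p.1, Q (p, 0)), ft (p.2, 0)) *
            (dSnd f (p.1, Q (p, 0)) * dSnd Q (p, 0)) +
          dSnd (fun p => Q (p, 0)) (f (p.1, Q (p, 0)), ft (p.2, 0)) * dSnd ft (p.2, 0) := by
  have hsnd : Tendsto (fun p : ℂ × ℂ => p.2) (𝓝 0) (𝓝 0) := continuous_snd.tendsto' 0 0 rfl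
  have hsnd0 : Tendsto (fun p : ℂ × ℂ => (p.2, (0 : ℂ))) (𝓝 0) (𝓝 0) :=
    tendsto_of_continuousAt (by fun_prop) rfl
  have hslice : Tendsto (fun p : ℂ × ℂ => (p.1, Q (p, 0))) (𝓝 0) (𝓝 0) :=
    tendsto_of_continuousAt (continuousAt_fst.prodMk hQ.analyticAt_slice.continuousAt)
      (by rw [show Q (0, 0) = 0 from hQ.apply_zero]; rfl)
  have hemb : Tendsto (fun p : ℂ × ℂ => (p, (0 : ℂ))) (𝓝 0) (𝓝 0) :=
    tendsto_of_continuousAt (by fun_prop) rfl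
  have himg : Tendsto (fun p : ℂ × ℂ => ((f (p.1, Q (p, 0)), ft (p.2, 0)), (0 : ℂ)))
      (𝓝 0) (𝓝 0) :=
    (((tendsto_of_continuousAt h.f_an.continuousAt h.f_zero).comp hslice).prodMk_nhds
      ((tendsto_of_continuousAt h.ft_an.continuousAt h.ft_zero).comp hsnd0)).prodMk_nhds
      tendsto_const_nhds
  filter_upwards [hemb.eventually h.map.eventually_nhds, hsnd.eventually hgt,
    hsnd.eventually hgt', hslice.eventually h.g_an.eventually_analyticAt,
    hslice.eventually h.f_an.eventually_analyticAt, hsnd0.eventually h.ft_an.eventually_analyticAt,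
    hsnd0.eventually h.gt_an.eventually_analyticAt,
    hemb.eventually hQ.analyticAt.eventually_analyticAt,
    himg.eventually hQ.analyticAt.eventually_analyticAt] with p hmap e0 e1 hg hf hft hgt hQp hQi
  have dQ := hasDerivAt_dSnd hQp
  have dg := (hasDerivAt_dSnd hg).comp (0 : ℂ) dQ
  have df := (hasDerivAt_dSnd hf).comp (0 : ℂ) dQ
  have dft := hasDerivAt_dSnd hft
  have dgt := hasDerivAt_dSnd hgt
  rw [e1] at dgt
  have hQi' : HasFDerivAt Q (fderiv ℂ Q ((f (p.1, Q (p, 0)), ft (p.2, 0)), 0))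
      ((f (p.1, Q (p, 0)), ft (p.2, 0)), gt (p.2, 0)) := by
    rw [e0]
    exact hQi.differentiableAt.hasFDerivAt
  have dR := HasFDerivAt.comp_hasDerivAt (l := Q)
    (f := fun τ => ((f (p.1, Q (p, τ)), ft (p.2, τ)), gt (p.2, τ))) (0 : ℂ) hQi'
    ((df.prodMk dft).prodMk dgt)
  rw [fderiv_prodMk_zero hQi, fderiv_apply_eq] at dR
  have hτ : ∀ᶠ τ in 𝓝 (0 : ℂ),
      g (p.1, Q (p, τ)) = Q ((f (p.1, Q (p, τ)), ft (p.2, τ)), gt (p.2, τ)) :=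
    (Continuous.tendsto' (by fun_prop : Continuous fun τ : ℂ => (p, τ)) 0 (p, 0) rfl).eventually
      hmap
  exact dg.unique (dR.congr_of_eventuallyEq hτ)

lemma SegreMap.order_lt_two (h : SegreMap Q Q f g ft gt) (hQ : NormalGerm Q) {m l r c : ℕ}
    (hq : HasLead (fun p => Q (p, 0)) m l)
    (hr : analyticOrderAt (fun z => f (z, 0)) 0 = r)
    (hs : analyticOrderAt (fun χ => ft (χ, 0)) 0 = r)
    (hg : HasLead g r 0) (hgt : HasLead gt r c) : r < 2 := by
  by_contra! hr2
  obtain ⟨k, rfl⟩ : ∃ k, r = k + 2 := ⟨r - 2, by omega⟩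
  have hl : 1 ≤ l := hq.pos_of_snd hQ.eventually_snd
  have hm : 1 ≤ m := hq.pos_of_fst hQ.eventually_fst
  obtain ⟨m, rfl⟩ : ∃ j, m = j + 1 := ⟨m - 1, by omega⟩
  have hgt0 := hgt.eventually_fst_eq_zero (by omega)
  have hgt1 := (HasLead.dSnd (m := k + 1) hgt).eventually_fst_eq_zero (by omega)
  have ha := hQ.analyticAt_fst_slice h.f_an
  have ha0 := (hQ.fst_slice_zero (f := f)).trans h.f_zero
  have har := (hQ.order_fst_slice (f := f)).trans hr
  have hb := hasLead_comp_snd (analyticAt_prodMk_zero h.ft_an) hs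
  have hU : AnalyticAt ℂ (fun p : ℂ × ℂ => dSnd Q (p, 0)) 0 :=
    AnalyticAt.fun_comp (f := fun p : ℂ × ℂ => (p, (0 : ℂ))) (analyticAt_dSnd hQ.analyticAt)
      (by fun_prop)
  have hU0 : dSnd Q ((0 : ℂ × ℂ), 0) ≠ 0 := by
    have h1 : HasDerivAt (fun τ => Q ((0 : ℂ × ℂ), τ)) 1 0 :=
      (hasDerivAt_id (0 : ℂ)).congr_of_eventuallyEq (eventually_zero_prodMk hQ.fst_zero)
    rw [(hasDerivAt_dSnd (y := ((0 : ℂ × ℂ), (0 : ℂ))) hQ.analyticAt).unique h1]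
    exact one_ne_zero
  have hL : HasLead (fun p => dSnd g (p.1, Q (p, 0)) * dSnd Q (p, 0)) ((m + 1) * (k + 1))
      ((k + 1) * l) := by
    simpa using (hasLead_comp_slice hQ hq (HasLead.dSnd (m := k + 1) hg)).mul
      (hasLead_zero_zero hU hU0)
  obtain ⟨φ, hφ, hbφ, -⟩ := hb
  obtain ⟨C, hC, hdC⟩ := hq.exists_dFst_eq
  have hab : AnalyticAt ℂ (fun p : ℂ × ℂ => (f (p.1, Q (p, 0)), ft (p.2, 0))) 0 :=
    ha.prod (AnalyticAt.fun_comp (f := fun p : ℂ × ℂ => (p.2, (0 : ℂ))) h.ft_an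
      (analyticAt_snd.prod analyticAt_const))
  have hab0 : (f ((0 : ℂ × ℂ).1, Q ((0 : ℂ × ℂ), 0)), ft ((0 : ℂ × ℂ).2, (0 : ℂ))) = 0 := by
    rw [ha0, show ft ((0 : ℂ × ℂ).2, (0 : ℂ)) = 0 from h.ft_zero]
    rfl
  have hCab : AnalyticAt ℂ (fun p : ℂ × ℂ => C (f (p.1, Q (p, 0)), ft (p.2, 0))) 0 :=
    AnalyticAt.fun_comp (f := fun p : ℂ × ℂ => (f (p.1, Q (p, 0)), ft (p.2, 0)))
      (by rw [hab0]; exact hC) hab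
  have hf1 := hQ.analyticAt_fst_slice (analyticAt_dSnd h.f_an)
  have hR : HasLead (fun p => dSnd (fun p => Q (p, 0)) (f (p.1, Q (p, 0)), ft (p.2, 0)) *
      dSnd ft (p.2, 0)) ((m + 1) * (k + 1)) ((k + 1) * l) := by
    have hlt : (m + 1) * (k + 1) < (k + 2) * (m + 1) := by nlinarith
    refine (hL.add hlt
      (E := fun p => -(dFst (fun p => Q (p, 0)) (f (p.1, Q (p, 0)), ft (p.2, 0)) *
        (dSnd f (p.1, Q (p, 0)) * dSnd Q (p, 0))))
      (H := fun p => -(φ p ^ (m + 1) * C (f (p.1, Q (p, 0)), ft (p.2, 0)) *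
        (dSnd f (p.1, Q (p, 0)) * dSnd Q (p, 0))))
      (((hφ.pow (m + 1)).mul hCab).mul (hf1.mul hU)).neg ?_).congr ?_
    · filter_upwards [hbφ, (tendsto_of_continuousAt hab.continuousAt hab0).eventually hdC]
        with p e1 e2
      simp only [e2]
      rw [e1, pow_mul]
      ring
    · filter_upwards [h.deriv_slice hQ hgt0 hgt1] with p e
      rw [e]
      ring
  have hft1 : AnalyticAt ℂ (fun χ : ℂ => dSnd ft (χ, 0)) 0 :=
    analyticAt_prodMk_zero (analyticAt_dSnd h.ft_an)
  by_cases hu : analyticOrderAt (fun χ : ℂ => dSnd ft (χ, 0)) 0 = ⊤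
  · refine hR.not_eventually_eq_zero ?_
    filter_upwards [(continuous_snd.tendsto' (0 : ℂ × ℂ) 0 rfl).eventually
      (analyticOrderAt_eq_top.1 hu)] with p e
    rw [e, mul_zero]
  · obtain ⟨u, hu⟩ := ENat.ne_top_iff_exists.1 hu
    have h1 := ((HasLead.dSnd hq).comp ha ha0 har
      (hasLead_comp_snd (analyticAt_prodMk_zero h.ft_an) hs) (by omega)).mul
      (hasLead_comp_snd hft1 hu.symm)
    have := (hR.unique h1).2
    nlinarith

end SelfMaps

section OrderComparison

variable {Q Qb Q' Qb' : (ℂ × ℂ) × ℂ → ℂ} {f g ft gt : ℂ × ℂ → ℂ}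

/-- The exponents attached to `q(z,χ) = Q(z,χ,0)` agree for a germ and its conjugate. -/
def SameLead (Q Qb : (ℂ × ℂ) × ℂ → ℂ) : Prop :=
  ∀ m l, HasLead (fun p => Q (p, 0)) m l → HasLead (fun p => Qb (p, 0)) m l

/-- The exponents of `g` exist and satisfy the relations forced by the map identity. -/
lemma SegreMap.exists_hasLead_transversal (h : SegreMap Q Q' f g ft gt) (hQ : NormalGerm Q)
    (hQ' : NormalGerm Q') (hgt : ∀ᶠ χ in 𝓝 (0 : ℂ), gt (χ, 0) = 0) {r s m' l' : ℕ}
    (hr : analyticOrderAt (fun z => f (z, 0)) 0 = r)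
    (hs : analyticOrderAt (fun χ => ft (χ, 0)) 0 = s)
    (hq' : HasLead (fun p => Q' (p, 0)) m' l') :
    ∃ m l t c, HasLead (fun p => Q (p, 0)) m l ∧ HasLead g t c ∧ 1 ≤ m ∧ 1 ≤ l ∧ 1 ≤ t ∧
      m * t = s * m' ∧ t * l + c = r * l' := by
  have hS := h.hasLead_slice hQ hgt hr hs hq'
  have hg0 := h.g_eventually_zero hQ hQ'
  have hslice : Tendsto (fun p : ℂ × ℂ => (p.1, Q (p, 0))) (𝓝 0) (𝓝 0) :=
    tendsto_of_continuousAt (continuousAt_fst.prodMk hQ.analyticAt_slice.continuousAt)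
      (by rw [show Q (0, 0) = 0 from hQ.apply_zero]; rfl)
  obtain ⟨t, c, hg⟩ := exists_hasLead h.g_an fun hz =>
    hS.not_eventually_eq_zero (hslice.eventually hz)
  obtain ⟨m, l, hq⟩ := exists_hasLead hQ.analyticAt_slice fun hz => by
    refine hS.not_eventually_eq_zero ?_
    filter_upwards [hz, (continuous_fst.tendsto' (0 : ℂ × ℂ) 0 rfl).eventually hg0] with p e1 e2
    rw [e1, e2]
  obtain ⟨e1, e2⟩ := (hasLead_comp_slice hQ hq hg).unique hS
  exact ⟨m, l, t, c, hq, hg, hq.pos_of_fst hQ.eventually_fst, hq.pos_of_snd hQ.eventually_snd,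
    hg.pos_of_fst hg0, e1, e2⟩

lemma SegreMap.order_eq (h : SegreMap Q Q' f g ft gt) (hQ : SegrePair Q Qb)
    (hQ' : SegrePair Q' Qb') (hlead : SameLead Q Qb) (hlead' : SameLead Q' Qb')
    (hfin : ¬ ∀ᶠ p in 𝓝 (0 : ℂ × ℂ), Q' (p, 0) = 0) {r s : ℕ}
    (hr : analyticOrderAt (fun z => f (z, 0)) 0 = r)
    (hs : analyticOrderAt (fun χ => ft (χ, 0)) 0 = s) :
    r = s ∧ (Q' = Q → r = 1 ∧ HasLead g 1 0 ∧ HasLead gt 1 0) := by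
  have h' := h.symm hQ hQ'
  obtain ⟨m', l', hq'⟩ := exists_hasLead hQ'.left.analyticAt_slice hfin
  obtain ⟨m, l, t, c, hq, hg, hm, hl, ht, e1, e2⟩ := h.exists_hasLead_transversal hQ.left hQ'.left
    (h'.g_eventually_zero hQ.right hQ'.right) hr hs hq'
  obtain ⟨m₁, l₁, t₁, c₁, hq₁, hgt, -, -, ht₁, e3, e4⟩ :=
    h'.exists_hasLead_transversal hQ.right hQ'.right (h.g_eventually_zero hQ.left hQ'.left)
    hs hr (hlead' _ _ hq')
  obtain ⟨rfl, rfl⟩ := (hlead _ _ hq).unique hq₁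
  have hm' := hq'.pos_of_fst hQ'.left.eventually_fst
  have htt : t₁ ≤ t := h.transversal_order_le hQ.left hQ'.left hr hq' hg hgt (by nlinarith)
  have htt' : t ≤ t₁ :=
    h'.transversal_order_le hQ.right hQ'.right hs (hlead' _ _ hq') hgt hg (by nlinarith)
  obtain rfl : t = t₁ := le_antisymm htt' htt
  obtain rfl : s = r := Nat.eq_of_mul_eq_mul_right hm' (e1.symm.trans e3)
  refine ⟨rfl, ?_⟩
  rintro rfl
  obtain ⟨rfl, rfl⟩ := hq.unique hq'
  obtain rfl : t = s := Nat.eq_of_mul_eq_mul_left hm (e1.trans (mul_comm _ _))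
  obtain rfl : c = 0 := by omega
  obtain rfl : c₁ = 0 := by omega
  have := h.order_lt_two hQ.left hq hr hs hg hgt
  obtain rfl : t = 1 := by omega
  exact ⟨rfl, hg, hgt⟩

end OrderComparison

section Conjugation

/-- The conjugate `v ↦ conj (p (star v))` of a continuous multilinear form. -/
noncomputable def starMultilinear {E : Type*} [NormedAddCommGroup E] [NormedSpace ℂ E]
    [StarAddMonoid E] [NormedStarGroup E] [StarModule ℂ E] {k : ℕ}
    (p : E [×k]→L[ℂ] ℂ) : E [×k]→L[ℂ] ℂ :=
  MultilinearMap.mkContinuous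
    { toFun := fun v => star (p (fun i => star (v i)))
      map_update_add' := fun v i x y => by
        have h : ∀ x : E, (fun j => star (Function.update v i x j)) =
            Function.update (fun j => star (v j)) i (star x) := fun x => by
          ext j
          by_cases hj : j = i
          · subst hj
            simp
          · simp [hj]
        simp only [h, star_add, p.map_update_add]
      map_update_smul' := fun v i c x => by
        have h : ∀ x : E, (fun j => star (Function.update v i x j)) =
            Function.update (fun j => star (v j)) i (star x) := fun x => by
          ext j
          by_cases hj : j = i
          · subst hj
            simp
          · simp [hj]
        simp only [h, star_smul, p.map_update_smul, star_star] }
    ‖p‖ fun v => by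
      have := p.le_opNorm fun i => star (v i)
      simpa only [norm_star, MultilinearMap.coe_mk] using this

lemma analyticAt_star_comp_star {E : Type*} [NormedAddCommGroup E] [NormedSpace ℂ E]
    [StarAddMonoid E] [NormedStarGroup E] [StarModule ℂ E] {F : E → ℂ}
    (hF : AnalyticAt ℂ F 0) : AnalyticAt ℂ (fun v => star (F (star v))) 0 := by
  obtain ⟨p, r, hp⟩ := hF
  refine ⟨fun k => starMultilinear (p k), r, ?_, hp.r_pos, fun {y} hy => ?_⟩
  · refine hp.r_le.trans (FormalMultilinearSeries.radius_le_of_le fun k => ?_)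
    exact MultilinearMap.mkContinuous_norm_le _ (norm_nonneg _) _
  · have hy' : star y ∈ Metric.eball (0 : E) r := by
      simpa [enorm_eq_nnnorm] using hy
    have := (hp.hasSum hy').star
    simpa [starMultilinear] using this

lemma star_ofProd {E F : Type*} [Star E] [Star F] (a : E) (b : F) :
    star (a, b) = (star a, star b) := rfl

/-- The germ `v ↦ conj (Q (star v))`. -/
def starGerm (Q : (ℂ × ℂ) × ℂ → ℂ) : (ℂ × ℂ) × ℂ → ℂ := fun v => star (Q (star v))

lemma tendsto_star_zero {E : Type*} [NormedAddCommGroup E] [StarAddMonoid E]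
    [NormedStarGroup E] : Tendsto (star : E → E) (𝓝 0) (𝓝 0) :=
  continuous_star.tendsto' 0 0 (star_zero E)

variable {Q : (ℂ × ℂ) × ℂ → ℂ}

lemma NormalGerm.starGerm (hQ : NormalGerm Q) : NormalGerm (starGerm Q) where
  analyticAt := analyticAt_star_comp_star hQ.analyticAt
  fst_zero := by
    filter_upwards [tendsto_star_zero.eventually hQ.fst_zero] with p hp
    simpa [HSPMpaper.starGerm, star_ofProd] using congrArg star hp
  snd_zero := by
    filter_upwards [tendsto_star_zero.eventually hQ.snd_zero] with p hp
    simpa [HSPMpaper.starGerm, star_ofProd] using congrArg star hp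

lemma segrePair_starGerm (hQ : NormalGerm Q)
    (hreal : ∀ᶠ p in 𝓝 (0 : (ℂ × ℂ) × ℂ), Q (p.1.swap, starGerm Q p) = p.2) :
    SegrePair Q (starGerm Q) where
  left := hQ
  right := hQ.starGerm
  inv_left := hreal
  inv_right := by
    filter_upwards [tendsto_star_zero.eventually hreal] with p hp
    have hswap : star p.1.swap = (star p.1).swap := rfl
    simpa [starGerm, star_ofProd, hswap] using congrArg star hp

lemma analyticOrderAt_star_comp_star {φ : ℂ → ℂ} (hφ : AnalyticAt ℂ φ 0) {l : ℕ}
    (hl : analyticOrderAt φ 0 = l) : analyticOrderAt (fun x => star (φ (star x))) 0 = l := by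
  obtain ⟨ψ, hψ, hψ0, h⟩ := hφ.analyticOrderAt_eq_natCast.1 hl
  refine (analyticAt_star_comp_star hφ).analyticOrderAt_eq_natCast.2
    ⟨fun x => star (ψ (star x)), analyticAt_star_comp_star hψ, by simpa using hψ0, ?_⟩
  filter_upwards [tendsto_star_zero.eventually h] with x hx
  simpa using congrArg star hx

lemma sameLead_starGerm : SameLead Q (starGerm Q) := by
  rintro m l ⟨B, hB, hFB, hl⟩
  refine ⟨fun v => star (B (star v)), analyticAt_star_comp_star hB, ?_, ?_⟩
  · filter_upwards [tendsto_star_zero.eventually hFB] with p hp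
    simpa [starGerm, star_ofProd] using congrArg star hp
  · simpa [star_ofProd] using
      analyticOrderAt_star_comp_star (analyticAt_prodMk_zero hB) hl

end Conjugation

section Translation

/-- The germ in scalar variables attached to a defining function of dimension one. -/
def scalarQ (Q : (Fin 1 → ℂ) → (Fin 1 → ℂ) → ℂ → ℂ) : (ℂ × ℂ) × ℂ → ℂ :=
  fun p => Q (fun _ => p.1.1) (fun _ => p.1.2) p.2

/-- The germ in scalar variables attached to a function of `(z, w)` with `z ∈ ℂ¹`. -/
def scalarG (g : (Fin 1 → ℂ) → ℂ → ℂ) : ℂ × ℂ → ℂ := fun p => g (fun _ => p.1) p.2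

lemma const_apply_zero (z : Fin 1 → ℂ) : (fun _ => z 0) = z := by
  ext i
  rw [Subsingleton.elim i 0]

lemma analyticAt_const_pi {E : Type*} [NormedAddCommGroup E] [NormedSpace ℂ E] {φ : E → ℂ} {x : E}
    (hφ : AnalyticAt ℂ φ x) : AnalyticAt ℂ (fun y => (fun _ : Fin 1 => φ y)) x :=
  AnalyticAt.pi fun _ => hφ

lemma vanishOrder_eq {φ : (Fin 1 → ℂ) → ℂ} {r : ℕ}
    (hφ : AnalyticAt ℂ (fun z : ℂ => φ (fun _ => z)) 0)
    (hr : analyticOrderAt (fun z : ℂ => φ (fun _ => z)) 0 = r) : vanishOrder φ = r := by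
  obtain ⟨h1, h2⟩ := (analyticOrderAt_eq_nat_iff_iteratedDeriv_eq_zero hφ).1 hr
  have key : ∀ d (z : Fin 1 → ℂ), homogTerm d φ z =
      z 0 ^ d * iteratedDeriv d (fun z : ℂ => φ (fun _ => z)) 0 / (d.factorial : ℂ) := by
    intro d z
    have hcomp : φ = (fun z : ℂ => φ (fun _ => z)) ∘
        (ContinuousLinearEquiv.funUnique (Fin 1) ℂ ℂ) := by
      ext z
      exact congrArg φ (const_apply_zero z).symm
    have := (ContinuousLinearEquiv.funUnique (Fin 1) ℂ ℂ).iteratedFDerivWithin_comp_right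
      (fun z : ℂ => φ (fun _ => z)) uniqueDiffOn_univ (x := 0) (Set.mem_univ _) d
    rw [Set.preimage_univ, iteratedFDerivWithin_univ, iteratedFDerivWithin_univ, ← hcomp] at this
    rw [homogTerm, this, ContinuousMultilinearMap.compContinuousLinearMap_apply,
      iteratedFDeriv_apply_eq_iteratedDeriv_mul_prod]
    simp
  have hmem : r ∈ {d | homogTerm d φ ≠ 0} := by
    intro h0
    have := congrFun h0 (fun _ => 1)
    rw [key] at this
    simp [h2, Nat.factorial_ne_zero] at this
  refine le_antisymm (Nat.sInf_le hmem) (le_csInf ⟨r, hmem⟩ fun d hd => ?_)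
  by_contra! hlt
  refine hd (funext fun z => ?_)
  rw [key, h1 d hlt]
  simp


lemma normalGerm_scalarQ {Q : (Fin 1 → ℂ) → (Fin 1 → ℂ) → ℂ → ℂ} (hQ : IsNormalDF Q) :
    NormalGerm (scalarQ Q) where
  analyticAt := AnalyticAt.fun_comp
    (g := fun q : (Fin 1 → ℂ) × (Fin 1 → ℂ) × ℂ => Q q.1 q.2.1 q.2.2)
    (f := fun p : (ℂ × ℂ) × ℂ =>
      ((fun _ : Fin 1 => p.1.1), (fun _ : Fin 1 => p.1.2), p.2)) hQ.1.self_of_nhds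
    ((analyticAt_const_pi (analyticAt_fst.comp analyticAt_fst)).prod
      ((analyticAt_const_pi (analyticAt_snd.comp analyticAt_fst)).prod analyticAt_snd))
  fst_zero := by
    have : Tendsto (fun p : ℂ × ℂ => ((0 : Fin 1 → ℂ), (fun _ : Fin 1 => p.1), p.2))
        (𝓝 0) (𝓝 0) := tendsto_of_continuousAt (by fun_prop) rfl
    exact (this.eventually hQ.2).mono fun p hp => hp.1
  snd_zero := by
    have : Tendsto (fun p : ℂ × ℂ => ((fun _ : Fin 1 => p.1), (0 : Fin 1 → ℂ), p.2))
        (𝓝 0) (𝓝 0) := tendsto_of_continuousAt (by fun_prop) rfl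
    exact (this.eventually hQ.2).mono fun p hp => hp.2

lemma segrePair_scalarQ {Q : (Fin 1 → ℂ) → (Fin 1 → ℂ) → ℂ → ℂ} (hQ : IsRealNormalDF Q) :
    SegrePair (scalarQ Q) (starGerm (scalarQ Q)) := by
  refine segrePair_starGerm (normalGerm_scalarQ hQ.1) ?_
  have : Tendsto (fun p : (ℂ × ℂ) × ℂ =>
      ((fun _ : Fin 1 => p.1.2), (fun _ : Fin 1 => p.1.1), p.2)) (𝓝 0) (𝓝 0) :=
    tendsto_of_continuousAt (by fun_prop) rfl
  exact (this.eventually hQ.2).mono fun p hp => hp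

lemma analyticAt_scalarG {g : (Fin 1 → ℂ) → ℂ → ℂ}
    (hg : AnalyticAt ℂ (fun q : (Fin 1 → ℂ) × ℂ => g q.1 q.2) 0) :
    AnalyticAt ℂ (scalarG g) 0 :=
  AnalyticAt.fun_comp (g := fun q : (Fin 1 → ℂ) × ℂ => g q.1 q.2)
    (f := fun p : ℂ × ℂ => ((fun _ : Fin 1 => p.1), p.2)) hg
    ((analyticAt_const_pi analyticAt_fst).prod analyticAt_snd)

lemma analyticAt_apply_zero {f : (Fin 1 → ℂ) → ℂ → Fin 1 → ℂ}
    (hf : AnalyticAt ℂ (fun q : (Fin 1 → ℂ) × ℂ => f q.1 q.2) 0) :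
    AnalyticAt ℂ (fun q : (Fin 1 → ℂ) × ℂ => f q.1 q.2 0) 0 :=
  ((ContinuousLinearMap.proj (R := ℂ) (φ := fun _ : Fin 1 => ℂ) 0).analyticAt _).comp hf

lemma segreMap_scalar {Q Q' : (Fin 1 → ℂ) → (Fin 1 → ℂ) → ℂ → ℂ}
    {f ft : (Fin 1 → ℂ) → ℂ → Fin 1 → ℂ} {g gt : (Fin 1 → ℂ) → ℂ → ℂ}
    (h : IsHSPM Q Q' f g ft gt) :
    SegreMap (scalarQ Q) (scalarQ Q') (scalarG fun z w => f z w 0) (scalarG g)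
      (scalarG fun z w => ft z w 0) (scalarG gt) := by
  obtain ⟨hf, hg, hft, hgt, f0, g0, ft0, gt0, hmap⟩ := h
  refine ⟨analyticAt_scalarG (analyticAt_apply_zero hf.self_of_nhds),
    analyticAt_scalarG hg.self_of_nhds,
    analyticAt_scalarG (analyticAt_apply_zero hft.self_of_nhds),
    analyticAt_scalarG hgt.self_of_nhds, congrFun f0 0, g0, congrFun ft0 0, gt0, ?_⟩
  have : Tendsto (fun p : (ℂ × ℂ) × ℂ =>
      ((fun _ : Fin 1 => p.1.1), (fun _ : Fin 1 => p.1.2), p.2)) (𝓝 0) (𝓝 0) :=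
    tendsto_of_continuousAt (by fun_prop) rfl
  filter_upwards [this.eventually hmap] with p hp
  simpa only [scalarQ, scalarG, const_apply_zero] using hp

lemma not_eventually_scalarQ {Q : (Fin 1 → ℂ) → (Fin 1 → ℂ) → ℂ → ℂ} (hQ : FiniteType Q) :
    ¬ ∀ᶠ p in 𝓝 (0 : ℂ × ℂ), scalarQ Q (p, 0) = 0 := by
  refine fun h => hQ ?_
  have : Tendsto (fun p : (Fin 1 → ℂ) × (Fin 1 → ℂ) => (p.1 0, p.2 0)) (𝓝 0) (𝓝 0) :=
    tendsto_of_continuousAt (by fun_prop) rfl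
  filter_upwards [this.eventually h] with p hp
  simpa only [scalarQ, const_apply_zero] using hp

/-- A map whose Jacobian is not identically zero has a finite order of vanishing. -/
lemma exists_order_of_jacz {f : (Fin 1 → ℂ) → ℂ → Fin 1 → ℂ}
    (h : ¬ ∀ᶠ z in 𝓝 (0 : Fin 1 → ℂ), (jacz f z).det = 0) :
    ∃ r : ℕ, analyticOrderAt (fun z => scalarG (fun z w => f z w 0) (z, 0)) 0 = r := by
  by_contra! hno
  have htop : analyticOrderAt (fun z => scalarG (fun z w => f z w 0) (z, 0)) 0 = ⊤ := by
    by_contra hne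
    obtain ⟨r, hr⟩ := ENat.ne_top_iff_exists.1 hne
    exact hno r hr.symm
  refine h ?_
  have : Tendsto (fun z : Fin 1 → ℂ => z 0) (𝓝 0) (𝓝 0) :=
    (continuous_apply 0).tendsto' 0 0 rfl
  filter_upwards [(this.eventually (analyticOrderAt_eq_top.1 htop)).eventually_nhds] with z hz
  have hz' : (fun z' => f z' 0 0) =ᶠ[𝓝 z] fun _ => 0 :=
    hz.mono fun z' h' => by simpa only [scalarG, const_apply_zero] using h'
  rw [Matrix.det_fin_one, jacz, Matrix.of_apply, pd, hz'.fderiv_eq]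
  simp

lemma not_eventually_eq_zero_of_order {f : (Fin 1 → ℂ) → ℂ → Fin 1 → ℂ} {r : ℕ}
    (hr : analyticOrderAt (fun z => scalarG (fun z w => f z w 0) (z, 0)) 0 = r) :
    ¬ ∀ᶠ z in 𝓝 (0 : Fin 1 → ℂ), f z 0 = 0 := by
  intro h
  have : Tendsto (fun z : ℂ => (fun _ : Fin 1 => z)) (𝓝 0) (𝓝 0) :=
    tendsto_of_continuousAt (by fun_prop) rfl
  have htop := analyticOrderAt_eq_top.2 ((this.eventually h).mono fun z hz =>
    show scalarG (fun z w => f z w 0) (z, 0) = 0 from congrFun hz 0)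
  exact ENat.natCast_ne_top r (hr.symm.trans htop)

lemma fderiv_eq_scalarG {g : (Fin 1 → ℂ) → ℂ → ℂ} (hg : AnalyticAt ℂ (scalarG g) 0)
    (v : (Fin 1 → ℂ) × ℂ) : fderiv ℂ (fun q : (Fin 1 → ℂ) × ℂ => g q.1 q.2) 0 v =
      dFst (scalarG g) 0 * v.1 0 + dSnd (scalarG g) 0 * v.2 := by
  let e : ((Fin 1 → ℂ) × ℂ) →L[ℂ] ℂ × ℂ :=
    (ContinuousLinearMap.proj (R := ℂ) (φ := fun _ : Fin 1 => ℂ) 0).prodMap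
      (ContinuousLinearMap.id ℂ ℂ)
  have hcomp : (fun q : (Fin 1 → ℂ) × ℂ => g q.1 q.2) = scalarG g ∘ e := by
    ext q
    exact congrArg (fun z => g z q.2) (const_apply_zero q.1).symm
  have he : e 0 = 0 := map_zero e
  have h := HasFDerivAt.comp (0 : (Fin 1 → ℂ) × ℂ) (g := scalarG g) (f := e)
    (by rw [he]; exact hg.differentiableAt.hasFDerivAt) e.hasFDerivAt
  rw [hcomp, h.fderiv, ContinuousLinearMap.comp_apply, ← fderiv_apply_eq]
  rfl

lemma dFst_ne_zero {f : ℂ × ℂ → ℂ} (hf : AnalyticAt ℂ f 0)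
    (hr : analyticOrderAt (fun z => f (z, 0)) 0 = (1 : ℕ)) : dFst f 0 ≠ 0 := by
  have := ((analyticOrderAt_eq_nat_iff_iteratedDeriv_eq_zero (analyticAt_prodMk_zero hf)).1 hr).2
  rw [iteratedDeriv_one] at this
  have h := (hasDerivAt_dFst (y := (0 : ℂ × ℂ)) hf).deriv
  exact fun h0 => this (h.trans h0)

lemma HasLead.dSnd_ne_zero {g : ℂ × ℂ → ℂ} (h : HasLead g 1 0) : HSPMpaper.dSnd g 0 ≠ 0 := by
  obtain ⟨B, hB, hgB, hl⟩ := HasLead.dSnd (m := 0) h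
  rw [hgB.self_of_nhds, pow_zero, one_mul]
  exact (analyticAt_prodMk_zero hB).analyticOrderAt_eq_zero.1 (by exact_mod_cast hl)

lemma HasLead.dFst_eq_zero {g : ℂ × ℂ → ℂ} (h : HasLead g 1 0) (hg : AnalyticAt ℂ g 0) :
    dFst g 0 = 0 :=
  (hasDerivAt_dFst (y := (0 : ℂ × ℂ)) hg).unique
    ((hasDerivAt_const (0 : ℂ) (0 : ℂ)).congr_of_eventuallyEq
      (h.eventually_fst_eq_zero one_ne_zero))

lemma pd_ne_zero {f : (Fin 1 → ℂ) → ℂ → Fin 1 → ℂ}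
    (hf : AnalyticAt ℂ (scalarG fun z w => f z w 0) 0)
    (hr : analyticOrderAt (fun z => scalarG (fun z w => f z w 0) (z, 0)) 0 = (1 : ℕ)) :
    pd 0 (fun z => f z 0 0) 0 ≠ 0 := by
  have hs : HasFDerivAt (fun z : Fin 1 → ℂ => f z 0 0) (dFst (scalarG fun z w => f z w 0) 0 •
      (ContinuousLinearMap.proj (R := ℂ) (φ := fun _ : Fin 1 => ℂ) 0)) 0 := by
    have h1 := HasDerivAt.comp_hasFDerivAt (h₂ := fun z => scalarG (fun z w => f z w 0) (z, 0))
      (f := fun z : Fin 1 → ℂ => z 0) (0 : Fin 1 → ℂ)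
      (hasDerivAt_dFst (y := (0 : ℂ × ℂ)) hf)
      (ContinuousLinearMap.proj (R := ℂ) (φ := fun _ : Fin 1 => ℂ) 0).hasFDerivAt
    refine h1.congr_of_eventuallyEq (Eventually.of_forall fun z => ?_)
    exact congrArg (fun z => f z 0 0) (const_apply_zero z).symm
  rw [pd, hs.fderiv]
  simpa using dFst_ne_zero hf hr

lemma det_jacFull_ne_zero {f : (Fin 1 → ℂ) → ℂ → Fin 1 → ℂ} {g : (Fin 1 → ℂ) → ℂ → ℂ}
    (hf : AnalyticAt ℂ (scalarG fun z w => f z w 0) 0) (hg : AnalyticAt ℂ (scalarG g) 0)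
    (hr : analyticOrderAt (fun z => scalarG (fun z w => f z w 0) (z, 0)) 0 = (1 : ℕ))
    (hlead : HasLead (scalarG g) 1 0) : (jacFull f g 0).det ≠ 0 := by
  have hF := fderiv_eq_scalarG hf
  have hG := fderiv_eq_scalarG hg
  have h0 : ∀ k, jacFull f g 0 0 k =
      fderiv ℂ (fun q : (Fin 1 → ℂ) × ℂ => f q.1 q.2 0) 0 (dirCT 1 k) := fun k => rfl
  have h1 : ∀ k, jacFull f g 0 1 k =
      fderiv ℂ (fun q : (Fin 1 → ℂ) × ℂ => g q.1 q.2) 0 (dirCT 1 k) := fun k => rfl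
  rw [Matrix.det_fin_two, h0, h0, h1, h1, hF, hF, hG, hG, hlead.dFst_eq_zero hg]
  simpa [dirCT] using ⟨dFst_ne_zero hf hr, hlead.dSnd_ne_zero⟩

end Translation

/-- Theorem 1.6, final part: in `ℂ²`, with `M'` of finite type at `0` and `ℋ`
totally Segre nondegenerate at `0`, the maps `z ↦ f(z,0)` and `χ ↦ f̃(χ,0)` are not identically
zero and have the same order of vanishing at `0`; if moreover `Q' = Q`, then `ℋ` is a
biholomorphism near `0`. -/
theorem statement6 (Q Q' : (Fin 1 → ℂ) → (Fin 1 → ℂ) → ℂ → ℂ)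
    (hQ : IsRealNormalDF Q) (hQ' : IsRealNormalDF Q')
    (hM' : FiniteType Q')
    (f ft : (Fin 1 → ℂ) → ℂ → Fin 1 → ℂ) (g gt : (Fin 1 → ℂ) → ℂ → ℂ)
    (hH : IsHSPM Q Q' f g ft gt)
    (hnd : TotallySegreNondeg f ft) :
    (¬ ∀ᶠ z in 𝓝 (0 : Fin 1 → ℂ), f z 0 = 0) ∧
    (¬ ∀ᶠ χ in 𝓝 (0 : Fin 1 → ℂ), ft χ 0 = 0) ∧
    vanishOrder (fun z => f z 0 0) = vanishOrder (fun χ => ft χ 0 0) ∧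
    (Q' = Q →
      pd 0 (fun z => f z 0 0) 0 ≠ 0 ∧
      pd 0 (fun χ => ft χ 0 0) 0 ≠ 0 ∧
      deriv (fun w => g 0 w) 0 ≠ 0 ∧
      (jacFull f g 0).det ≠ 0 ∧ (jacFull ft gt 0).det ≠ 0) := by
  have hH' := segreMap_scalar hH
  obtain ⟨r, hr⟩ := exists_order_of_jacz hnd.1
  obtain ⟨s, hs⟩ := exists_order_of_jacz hnd.2
  obtain ⟨rfl, hself⟩ := hH'.order_eq (segrePair_scalarQ hQ) (segrePair_scalarQ hQ')
    sameLead_starGerm sameLead_starGerm (not_eventually_scalarQ hM') hr hs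
  refine ⟨not_eventually_eq_zero_of_order hr, not_eventually_eq_zero_of_order hs, ?_, ?_⟩
  · rw [vanishOrder_eq (φ := fun z => f z 0 0) (analyticAt_prodMk_zero hH'.f_an) hr,
      vanishOrder_eq (φ := fun z => ft z 0 0) (analyticAt_prodMk_zero hH'.ft_an) hs]
  · rintro rfl
    obtain ⟨rfl, hg, hgt⟩ := hself rfl
    have hdg := (hasDerivAt_dSnd (y := (0 : ℂ × ℂ)) hH'.g_an).deriv
    exact ⟨pd_ne_zero hH'.f_an hr, pd_ne_zero hH'.ft_an hs,
      fun h0 => hg.dSnd_ne_zero (hdg.symm.trans h0),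
      det_jacFull_ne_zero hH'.f_an hH'.g_an hr hg, det_jacFull_ne_zero hH'.ft_an hH'.gt_an hs hgt⟩

end HSPMpaper
end

section
/- Let n = 1 and let Q be a real normal defining function of dimension 1 with (z,χ) ↦ Q(z,χ,0) not identically zero near 0 (M of finite type at 0). Write the Taylor expansion Q(z,χ,0) = Σ_{j,k ≥ 0} c_{j,k} z^j χ^k at 0, and set m := min{k : c_{j,k} ≠ 0 for some j}, r := min{j : c_{j,m} ≠ 0}, n₀ := min{j : c_{j,k} ≠ 0 for some k}, and s := min{k : c_{n₀,k} ≠ 0}. Then m = n₀ and r = s. -/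
open Filter Topology Complex

namespace HSPMpaper

variable {n : ℕ}

section DirectionalDerivatives

variable {E E' : Type*} [NormedAddCommGroup E] [NormedSpace ℂ E]
  [NormedAddCommGroup E'] [NormedSpace ℂ E']

/-- Iterated directional derivative along a list of vectors, the head being applied first. -/
noncomputable def listDeriv : List E → (E → ℂ) → E → ℂ
  | [], F => F
  | v :: L, F => listDeriv L fun p => fderiv ℂ F p v

lemma analyticAt_fderiv_apply {F : E → ℂ} {p : E} (hF : AnalyticAt ℂ F p) (v : E) :
    AnalyticAt ℂ (fun q => fderiv ℂ F q v) p :=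
  ((ContinuousLinearMap.apply ℂ ℂ v).analyticAt _).comp hF.fderiv

lemma analyticAt_listDeriv (L : List E) {F : E → ℂ} {p : E} (hF : AnalyticAt ℂ F p) :
    AnalyticAt ℂ (listDeriv L F) p := by
  induction L generalizing F with
  | nil => exact hF
  | cons v L ih => exact ih (analyticAt_fderiv_apply hF v)

lemma listDeriv_congr (L : List E) {F G : E → ℂ} {p : E} (h : F =ᶠ[𝓝 p] G) :
    listDeriv L F =ᶠ[𝓝 p] listDeriv L G := by
  induction L generalizing F G with
  | nil => exact h
  | cons v L ih => exact ih (h.fderiv.fun_comp fun A : E →L[ℂ] ℂ => A v)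

lemma listDeriv_append (L L' : List E) (F : E → ℂ) :
    listDeriv (L ++ L') F = listDeriv L' (listDeriv L F) := by
  induction L generalizing F with
  | nil => rfl
  | cons v L ih => exact ih _

lemma listDeriv_replicate (k : ℕ) (v : E) (F : E → ℂ) :
    listDeriv (List.replicate k v) F = (fun (G : E → ℂ) p => fderiv ℂ G p v)^[k] F := by
  induction k generalizing F with
  | zero => rfl
  | succ k ih => exact ih _

lemma listDeriv_zero (L : List E) : listDeriv L (fun _ => (0 : ℂ)) = fun _ => 0 := by
  induction L with
  | nil => rfl
  | cons v L ih => simpa [listDeriv] using ih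

lemma listDeriv_add (L : List E) {F G : E → ℂ} {p : E} (hF : AnalyticAt ℂ F p)
    (hG : AnalyticAt ℂ G p) :
    listDeriv L (fun q => F q + G q) p = listDeriv L F p + listDeriv L G p := by
  induction L generalizing F G with
  | nil => rfl
  | cons v L ih =>
    have h : (fun q => fderiv ℂ (fun x => F x + G x) q v) =ᶠ[𝓝 p]
        fun q => fderiv ℂ F q v + fderiv ℂ G q v := by
      filter_upwards [hF.eventually_analyticAt, hG.eventually_analyticAt] with q hq hq'
      rw [fderiv_fun_add hq.differentiableAt hq'.differentiableAt]
      rfl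
    exact (listDeriv_congr L h).eq_of_nhds.trans
      (ih (analyticAt_fderiv_apply hF v) (analyticAt_fderiv_apply hG v))

lemma listDeriv_perm {L L' : List E} (h : L.Perm L') {F : E → ℂ} {p : E}
    (hF : AnalyticAt ℂ F p) : listDeriv L F p = listDeriv L' F p := by
  induction h generalizing F with
  | nil => rfl
  | cons v _ ih => exact ih (analyticAt_fderiv_apply hF v)
  | swap v w L =>
    refine (listDeriv_congr L ?_).eq_of_nhds
    filter_upwards [hF.eventually_analyticAt] with q hq
    have hd : DifferentiableAt ℂ (fderiv ℂ F) q := hq.fderiv.differentiableAt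
    have hs : IsSymmSndFDerivAt ℂ F q := hq.contDiffAt.isSymmSndFDerivAt_of_omega
    have key (v w : E) : fderiv ℂ (fun x => fderiv ℂ F x v) q w = fderiv ℂ (fderiv ℂ F) q w v := by
      rw [fderiv_clm_apply hd (differentiableAt_const v)]
      simp
    rw [key, key]
    exact hs _ _
  | trans _ _ ih ih' => exact (ih hF).trans (ih' hF)

lemma listDeriv_comp {ι : E' → E} {ℓ : E' →L[ℂ] E} (hι : ∀ x, HasFDerivAt ι ℓ x) (L : List E')
    {F : E → ℂ} {x : E'} (hF : AnalyticAt ℂ F (ι x)) :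
    listDeriv L (fun y => F (ι y)) x = listDeriv (L.map ℓ) F (ι x) := by
  induction L generalizing F with
  | nil => rfl
  | cons v L ih =>
    have h : (fun y => fderiv ℂ (fun y => F (ι y)) y v) =ᶠ[𝓝 x]
        fun y => fderiv ℂ F (ι y) (ℓ v) := by
      filter_upwards [(hι x).continuousAt.eventually hF.eventually_analyticAt] with y hy
      exact congrArg (fun A : E' →L[ℂ] ℂ => A v)
        (hy.differentiableAt.hasFDerivAt.comp y (hι y)).fderiv
    exact (listDeriv_congr L h).eq_of_nhds.trans (ih (analyticAt_fderiv_apply hF _))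

/-- Leibniz rule when every proper subderivative of the second factor vanishes. -/
lemma listDeriv_mul_of_vanish (L : List E) {W K : E → ℂ} {p : E} (hW : AnalyticAt ℂ W p)
    (hK : AnalyticAt ℂ K p) (h0 : ∀ L', L'.Sublist L → L' ≠ L → listDeriv L' K p = 0) :
    listDeriv L (fun q => W q * K q) p = W p * listDeriv L K p := by
  induction L generalizing W K with
  | nil => rfl
  | cons v L ih =>
    have h : (fun q => fderiv ℂ (fun x => W x * K x) q v) =ᶠ[𝓝 p]
        fun q => fderiv ℂ W q v * K q + W q * fderiv ℂ K q v := by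
      filter_upwards [hW.eventually_analyticAt, hK.eventually_analyticAt] with q hq hq'
      rw [fderiv_fun_mul hq.differentiableAt hq'.differentiableAt]
      simp
      ring
    have hW' := analyticAt_fderiv_apply hW v
    have hK' := analyticAt_fderiv_apply hK v
    have hL : ∀ L', L'.Sublist L → listDeriv L' K p = 0 := fun L' hs =>
      h0 L' (hs.cons v) fun he => by simpa [he] using hs.length_le
    refine (listDeriv_congr L h).eq_of_nhds.trans ?_
    rw [listDeriv_add L (hW'.fun_mul hK) (hW.fun_mul hK'), ih hW' hK fun L' hs _ => hL L' hs,
      hL L (List.Sublist.refl L), ih hW hK' fun L' hs hne =>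
        h0 (v :: L') (hs.cons_cons v) (by simpa using hne)]
    simp [listDeriv]

/-- Chain rule for `p ↦ Φ (p, G p)` when every proper subderivative of `G` vanishes. -/
lemma listDeriv_graph_of_vanish (L : List E) {Φ : E × ℂ → ℂ} {G : E → ℂ} {p : E}
    (hΦ : AnalyticAt ℂ Φ (p, 0)) (hG : AnalyticAt ℂ G p) (hGp : G p = 0)
    (h0 : ∀ L', L'.Sublist L → L' ≠ L → listDeriv L' G p = 0) :
    listDeriv L (fun q => Φ (q, G q)) p =
      listDeriv L (fun q => Φ (q, 0)) p + fderiv ℂ Φ (p, 0) (0, 1) * listDeriv L G p := by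
  induction L generalizing Φ with
  | nil => simp [listDeriv, hGp]
  | cons v L ih =>
    have hpair : AnalyticAt ℂ (fun q => (q, G q)) p := analyticAt_id.prod hG
    have hΦG : AnalyticAt ℂ Φ (p, G p) := by rwa [hGp]
    have hτ := analyticAt_fderiv_apply hΦ ((0, 1) : E × ℂ)
    have hv := analyticAt_fderiv_apply hΦ ((v, 0) : E × ℂ)
    have h : (fun q => fderiv ℂ (fun x => Φ (x, G x)) q v) =ᶠ[𝓝 p]
        fun q => fderiv ℂ Φ (q, G q) (v, 0) +
          fderiv ℂ Φ (q, G q) (0, 1) * fderiv ℂ G q v := by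
      filter_upwards [hpair.continuousAt.eventually hΦG.eventually_analyticAt,
        hG.eventually_analyticAt] with q hq hq'
      have hc := hq.differentiableAt.hasFDerivAt.comp q
        ((hasFDerivAt_id q).prodMk hq'.differentiableAt.hasFDerivAt)
      have hs : ((v, fderiv ℂ G q v) : E × ℂ) = (v, 0) + fderiv ℂ G q v • (0, 1) := by simp
      calc _ = fderiv ℂ Φ (q, G q) (v, fderiv ℂ G q v) := by
            exact congrArg (fun A : E →L[ℂ] ℂ => A v) hc.fderiv
        _ = _ := by rw [hs, map_add, map_smul, smul_eq_mul, mul_comm]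
    have h' : (fun q => fderiv ℂ (fun x => Φ (x, 0)) q v) =ᶠ[𝓝 p]
        fun q => fderiv ℂ Φ (q, 0) (v, 0) := by
      have hcont : ContinuousAt (fun q : E => (q, (0 : ℂ))) p := by fun_prop
      filter_upwards [hcont.eventually hΦ.eventually_analyticAt] with q hq
      exact congrArg (fun A : E →L[ℂ] ℂ => A v)
        (hq.differentiableAt.hasFDerivAt.comp q (hasFDerivAt_prodMk_left q (0 : ℂ))).fderiv
    have hL : ∀ L', L'.Sublist L → listDeriv L' G p = 0 := fun L' hs =>
      h0 L' (hs.cons v) fun he => by simpa [he] using hs.length_le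
    have hvG : AnalyticAt ℂ (fun q => fderiv ℂ Φ (q, G q) (v, 0)) p :=
      AnalyticAt.fun_comp (g := fun x => fderiv ℂ Φ x (v, 0)) (by rwa [hGp]) hpair
    have hτG : AnalyticAt ℂ (fun q => fderiv ℂ Φ (q, G q) (0, 1)) p :=
      AnalyticAt.fun_comp (g := fun x => fderiv ℂ Φ x (0, 1)) (by rwa [hGp]) hpair
    have hG' := analyticAt_fderiv_apply hG v
    have e1 := (listDeriv_congr L h).eq_of_nhds
    have e2 := (listDeriv_congr L h').eq_of_nhds
    have e3 := listDeriv_mul_of_vanish L hτG hG' fun L' hs hne =>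
      h0 (v :: L') (hs.cons_cons v) (by simpa using hne)
    have e4 := ih hv fun L' hs _ => hL L' hs
    rw [hL L (List.Sublist.refl L), mul_zero, add_zero] at e4
    simp only [hGp] at e3
    change listDeriv L _ p = listDeriv L _ p + _ * listDeriv L _ p
    rw [e1, e2, listDeriv_add L hvG (hτG.fun_mul hG'), e3, e4]

/-- Iterated derivatives of the conjugate `conj ∘ F ∘ σ` of `F` by a conjugate-linear map `σ`. -/
lemma listDeriv_conj {σ : E → E} (hadd : ∀ p q, σ (p + q) = σ p + σ q)
    (hsmul : ∀ (t : ℂ) p, σ (t • p) = starRingEnd ℂ t • σ p) (hσ : Continuous σ) (L : List E)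
    {F : E → ℂ} {p : E} (hF : AnalyticAt ℂ F (σ p))
    (hG : AnalyticAt ℂ (fun q => starRingEnd ℂ (F (σ q))) p) :
    listDeriv L (fun q => starRingEnd ℂ (F (σ q))) p =
      starRingEnd ℂ (listDeriv (L.map σ) F (σ p)) := by
  induction L generalizing F with
  | nil => rfl
  | cons v L ih =>
    have h : (fun q => fderiv ℂ (fun x => starRingEnd ℂ (F (σ x))) q v) =ᶠ[𝓝 p]
        fun q => starRingEnd ℂ (fderiv ℂ F (σ q) (σ v)) := by
      filter_upwards [hσ.continuousAt.eventually hF.eventually_analyticAt, hG.eventually_analyticAt] with q hq hq'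
      rw [← hq'.differentiableAt.lineDeriv_eq_fderiv, ← hq.differentiableAt.lineDeriv_eq_fderiv,
        lineDeriv, lineDeriv]
      simp only [hadd, hsmul]
      simpa [Function.comp_def] using
        congrFun (deriv_conj_conj (f := fun t : ℂ => F (σ q + t • σ v))) 0
    refine (listDeriv_congr L h).eq_of_nhds.trans
      (ih (F := fun x => fderiv ℂ F x (σ v)) (analyticAt_fderiv_apply hF _) ?_)
    exact (analyticAt_fderiv_apply hG v).congr h

/-- A continuous implicit function is analytic; here `Φ` is normalized so that its differential is
the projection to the last coordinate. -/
lemma analyticAt_of_implicit [CompleteSpace E] {Φ : E × ℂ → ℂ} {G : E → ℂ} {p : E}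
    (hΦ : AnalyticAt ℂ Φ (p, 0)) (hd : fderiv ℂ Φ (p, 0) = ContinuousLinearMap.snd ℂ E ℂ)
    (hG : ContinuousAt G p) (hGp : G p = 0) (h : ∀ᶠ q in 𝓝 p, Φ (q, G q) = 0) :
    AnalyticAt ℂ G p := by
  have hΨ : AnalyticAt ℂ (fun x : E × ℂ => (x.1, Φ x)) (p, 0) := analyticAt_fst.prod hΦ
  have hΨd : HasStrictFDerivAt (fun x : E × ℂ => (x.1, Φ x))
      (ContinuousLinearEquiv.refl ℂ (E × ℂ) : E × ℂ →L[ℂ] E × ℂ) (p, 0) :=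
    hasStrictFDerivAt_fst.prodMk (hd ▸ hΦ.hasStrictFDerivAt)
  have h0 : Φ (p, 0) = 0 := by simpa [hGp] using h.self_of_nhds
  set e := hΨd.toOpenPartialHomeomorph with he
  have hmem : ((p, 0) : E × ℂ) ∈ e.source := hΨd.mem_toOpenPartialHomeomorph_source
  have hsymm : AnalyticAt ℂ e.symm (p, 0) := by
    have := e.analyticAt_symm' hmem (i := ContinuousLinearEquiv.refl ℂ (E × ℂ)) hΨ
      hΨd.hasFDerivAt.fderiv
    simpa [he, h0] using this
  have hpair : ContinuousAt (fun q => (q, G q)) p := continuousAt_id.prodMk hG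
  have hsrc : ∀ᶠ q in 𝓝 p, (q, G q) ∈ e.source :=
    hpair.eventually_mem (by simpa [hGp] using e.open_source.mem_nhds hmem)
  have hcomp : AnalyticAt ℂ (fun q : E => (e.symm (q, 0)).2) p :=
    analyticAt_snd.fun_comp (hsymm.fun_comp_of_eq (f := fun q : E => (q, (0 : ℂ)))
      (analyticAt_id.prod analyticAt_const) rfl)
  refine hcomp.congr ?_
  filter_upwards [h, hsrc] with q hq hq'
  have hl := e.left_inv hq'
  have : e (q, G q) = (q, 0) := by simp [he, hq]
  rw [this] at hl
  rw [hl]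

end DirectionalDerivatives

/-- The lexicographic minima of a support that is symmetric at its lowest elements. -/
lemma lexMin_eq_of_lowest_symm {P : ℕ → ℕ → Prop}
    (H : ∀ j k, (∀ j' k', j' ≤ j → k' ≤ k → (j', k') ≠ (j, k) → ¬ P k' j') → (P j k ↔ P k j)) :
    sInf {k | ∃ j, P j k} = sInf {j | ∃ k, P j k} ∧
      sInf {j | P j (sInf {k | ∃ j, P j k})} = sInf {k | P (sInf {j | ∃ k, P j k}) k} := by
  by_cases hne : ∃ j k, P j k
  · set N := sInf {j | ∃ k, P j k} with hN
    have hNmem : ∃ k, P N k := Nat.sInf_mem (s := {j | ∃ k, P j k}) hne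
    have hNlt : ∀ j < N, ∀ k, ¬ P j k := fun j hj k hP =>
      Nat.notMem_of_lt_sInf hj ⟨k, hP⟩
    set S := sInf {k | P N k} with hS
    have hSmem : P N S := Nat.sInf_mem (s := {k | P N k}) hNmem
    have hSlt : ∀ k < S, ¬ P N k := fun k hk hP => Nat.notMem_of_lt_sInf hk hP
    have hlow : ∀ j ≤ S, ∀ j' k', j' ≤ j → k' ≤ N → (j', k') ≠ (j, N) → ¬ P k' j' := by
      intro j hj j' k' hj' hk' hne'
      rcases hk'.lt_or_eq with hk' | rfl
      · exact hNlt k' hk' j'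
      · exact hSlt j' (lt_of_lt_of_le (lt_of_le_of_ne hj' fun h => hne' (by rw [h])) hj)
    have hSN : P S N := (H S N (hlow S le_rfl)).2 hSmem
    have hm : sInf {k | ∃ j, P j k} = N := by
      refine le_antisymm (Nat.sInf_le ⟨S, hSN⟩) (le_csInf ⟨N, S, hSN⟩ ?_)
      rintro k ⟨j, hjk⟩
      by_contra! hk
      exact hNlt k hk j ((H j k fun j' k' _ hk' _ => hNlt k' (hk'.trans_lt hk) j').1 hjk)
    refine ⟨hm, ?_⟩
    rw [hm]
    refine le_antisymm (Nat.sInf_le hSN) (le_csInf ⟨S, hSN⟩ ?_)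
    intro j hj
    by_contra! hjS
    exact hSlt j hjS ((H j N (hlow j hjS.le)).1 hj)
  · push Not at hne
    simp [hne]

lemma mpd_fin_one (k : ℕ) (F : (Fin 1 → ℂ) → ℂ) :
    mpd (fun _ => k) F = listDeriv (List.replicate k (Pi.single 0 1)) F := by
  rw [listDeriv_replicate]
  simp [mpd, List.ofFn_succ]
  rfl

/-- The list of `j` copies of the unit vector in the `z`-direction followed by `k` copies of the
unit vector in the `χ`-direction. -/
noncomputable def dirList (j k : ℕ) : List ((Fin 1 → ℂ) × (Fin 1 → ℂ)) :=
  List.replicate j (Pi.single 0 1, 0) ++ List.replicate k (0, Pi.single 0 1)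

lemma exists_of_sublist_dirList {j k : ℕ} {L : List ((Fin 1 → ℂ) × (Fin 1 → ℂ))}
    (h : L.Sublist (dirList j k)) : ∃ j' k', j' ≤ j ∧ k' ≤ k ∧ L = dirList j' k' := by
  obtain ⟨L₁, L₂, rfl, h₁, h₂⟩ := List.sublist_append_iff.1 h
  obtain ⟨j', hj', rfl⟩ := List.sublist_replicate_iff.1 h₁
  obtain ⟨k', hk', rfl⟩ := List.sublist_replicate_iff.1 h₂
  exact ⟨j', k', hj', hk', rfl⟩

/-- The mixed partial derivatives are iterated directional derivatives in `ℂ × ℂ`. -/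
lemma mpd_mpd_eq_listDeriv {F : (Fin 1 → ℂ) × (Fin 1 → ℂ) → ℂ} (hF : AnalyticAt ℂ F 0)
    (j k : ℕ) :
    mpd (fun _ => k) (fun χ => mpd (fun _ => j) (fun z => F (z, χ)) 0) 0 =
      listDeriv (dirList j k) F 0 := by
  have hι : ContinuousAt (fun χ : Fin 1 → ℂ => ((0 : Fin 1 → ℂ), χ)) 0 := by fun_prop
  have h : (fun χ => mpd (fun _ => j) (fun z => F (z, χ)) 0) =ᶠ[𝓝 0]
      fun χ => listDeriv (List.replicate j (Pi.single 0 1, 0)) F (0, χ) := by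
    filter_upwards [hι.eventually hF.eventually_analyticAt] with χ hχ
    rw [mpd_fin_one, listDeriv_comp (ι := fun z : Fin 1 → ℂ => (z, χ))
      (fun x => hasFDerivAt_prodMk_left x χ) _ hχ]
    simp
  rw [mpd_fin_one, (listDeriv_congr _ h).eq_of_nhds,
    listDeriv_comp (ι := fun χ : Fin 1 → ℂ => ((0 : Fin 1 → ℂ), χ))
      (F := listDeriv (List.replicate j (Pi.single 0 1, 0)) F) (fun x => hasFDerivAt_prodMk_right 0 x) _ (analyticAt_listDeriv _ hF),
    dirList, listDeriv_append]
  simp [Prod.mk_zero_zero]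

lemma map_swap_dirList_perm {σ : (Fin 1 → ℂ) × (Fin 1 → ℂ) → (Fin 1 → ℂ) × (Fin 1 → ℂ)}
    (hσ : σ = fun p => (conjV p.2, conjV p.1)) (j k : ℕ) :
    ((dirList j k).map σ).Perm (dirList k j) := by
  have h0 : conjV (0 : Fin 1 → ℂ) = 0 := by ext; simp [conjV]
  have h1 : conjV (Pi.single 0 1 : Fin 1 → ℂ) = Pi.single 0 1 := by
    ext i
    simp [conjV, Subsingleton.elim i 0]
  simp only [dirList, List.map_append, List.map_replicate, hσ, h0, h1]
  exact List.perm_append_comm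

/-- Observation 2.8: for `M ⊆ ℂ²` of finite type at `0` given in normal
coordinates, the extremal exponents of the Taylor expansion of `Q(z,χ,0)` satisfy `m = n₀` and
`r = s`. -/
theorem statement10 (Q : (Fin 1 → ℂ) → (Fin 1 → ℂ) → ℂ → ℂ)
    (hQ : IsRealNormalDF Q)
    (hM : FiniteType Q) :
    let c : ℕ → ℕ → ℂ := fun j k =>
      mpd (fun _ => k) (fun χ => mpd (fun _ => j) (fun z => Q z χ 0) 0) 0 /
        ((j.factorial : ℂ) * (k.factorial : ℂ))
    let m := sInf {k | ∃ j, c j k ≠ 0}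
    let r := sInf {j | c j m ≠ 0}
    let n₀ := sInf {j | ∃ k, c j k ≠ 0}
    let s := sInf {k | c n₀ k ≠ 0}
    m = n₀ ∧ r = s := by
  set Φ : ((Fin 1 → ℂ) × (Fin 1 → ℂ)) × ℂ → ℂ := fun p => Q p.1.1 p.1.2 p.2 with hΦdef
  obtain ⟨⟨hQan, hnorm⟩, hreal⟩ := hQ
  have hΦ : AnalyticAt ℂ Φ (0, 0) := by
    have hmap : AnalyticAt ℂ
        (fun p : ((Fin 1 → ℂ) × (Fin 1 → ℂ)) × ℂ => (p.1.1, p.1.2, p.2)) (0, 0) :=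
      (analyticAt_fst.fun_comp analyticAt_fst).prod
        ((analyticAt_snd.fun_comp analyticAt_fst).prod analyticAt_snd)
    exact hQan.self_of_nhds.fun_comp_of_eq hmap rfl
  have hΦd : fderiv ℂ Φ (0, 0) = ContinuousLinearMap.snd ℂ _ ℂ := by
    have hD := hΦ.differentiableAt.hasFDerivAt
    have hz : ∀ v t, fderiv ℂ Φ (0, 0) ((v, 0), t) = t := by
      intro v t
      let ι : (Fin 1 → ℂ) × ℂ →L[ℂ] ((Fin 1 → ℂ) × (Fin 1 → ℂ)) × ℂ :=
        ((ContinuousLinearMap.inl ℂ _ _).comp (ContinuousLinearMap.fst ℂ _ _)).prod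
          (ContinuousLinearMap.snd ℂ _ _)
      have h1 : HasFDerivAt (fun x => Φ (ι x)) ((fderiv ℂ Φ (0, 0)).comp ι) 0 :=
        HasFDerivAt.comp (f := ι) 0 hD ι.hasFDerivAt
      have h2 : (fun x : (Fin 1 → ℂ) × ℂ => Φ (ι x)) =ᶠ[𝓝 0] fun x => x.2 := by
        have hc : ContinuousAt (fun x : (Fin 1 → ℂ) × ℂ => (x.1, (0 : Fin 1 → ℂ), x.2)) 0 := by
          fun_prop
        filter_upwards [hc.eventually hnorm] with x hx
        exact hx.2
      exact congrArg (fun A : (Fin 1 → ℂ) × ℂ →L[ℂ] ℂ => A (v, t))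
        ((h1.congr_of_eventuallyEq h2.symm).unique hasFDerivAt_snd)
    have hχ : ∀ v t, fderiv ℂ Φ (0, 0) ((0, v), t) = t := by
      intro v t
      let ι : (Fin 1 → ℂ) × ℂ →L[ℂ] ((Fin 1 → ℂ) × (Fin 1 → ℂ)) × ℂ :=
        ((ContinuousLinearMap.inr ℂ _ _).comp (ContinuousLinearMap.fst ℂ _ _)).prod
          (ContinuousLinearMap.snd ℂ _ _)
      have h1 : HasFDerivAt (fun x => Φ (ι x)) ((fderiv ℂ Φ (0, 0)).comp ι) 0 :=
        HasFDerivAt.comp (f := ι) 0 hD ι.hasFDerivAt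
      have h2 : (fun x : (Fin 1 → ℂ) × ℂ => Φ (ι x)) =ᶠ[𝓝 0] fun x => x.2 := by
        have hc : ContinuousAt (fun x : (Fin 1 → ℂ) × ℂ => ((0 : Fin 1 → ℂ), x.1, x.2)) 0 := by
          fun_prop
        filter_upwards [hc.eventually hnorm] with x hx
        exact hx.1
      exact congrArg (fun A : (Fin 1 → ℂ) × ℂ →L[ℂ] ℂ => A (v, t))
        ((h1.congr_of_eventuallyEq h2.symm).unique hasFDerivAt_snd)
    refine ContinuousLinearMap.ext fun x => ?_
    obtain ⟨⟨v, w⟩, t⟩ := x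
    have hs : (((v, w), t) : ((Fin 1 → ℂ) × (Fin 1 → ℂ)) × ℂ) = ((v, 0), t) + ((0, w), 0) := by
      simp
    rw [hs, map_add, hz, hχ]
    simp
  set F : (Fin 1 → ℂ) × (Fin 1 → ℂ) → ℂ := fun p => Φ (p, 0) with hFdef
  have hF : AnalyticAt ℂ F 0 := hΦ.fun_comp_of_eq
    (f := fun p : (Fin 1 → ℂ) × (Fin 1 → ℂ) => (p, (0 : ℂ)))
    (analyticAt_id.prod analyticAt_const) rfl
  set σ : (Fin 1 → ℂ) × (Fin 1 → ℂ) → (Fin 1 → ℂ) × (Fin 1 → ℂ) :=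
    fun p => (conjV p.2, conjV p.1) with hσdef
  have hσ0 : σ 0 = 0 := by ext <;> simp [hσdef, conjV]
  have hσadd : ∀ p q, σ (p + q) = σ p + σ q := fun p q => by ext <;> simp [hσdef, conjV]
  have hσsmul : ∀ (t : ℂ) p, σ (t • p) = starRingEnd ℂ t • σ p := fun t p => by
    ext <;> simp [hσdef, conjV]
  have hσc : Continuous σ := by
    have : Continuous (conjV : (Fin 1 → ℂ) → Fin 1 → ℂ) :=
      continuous_pi fun i => continuous_conj.comp (continuous_apply i)
    exact (this.comp continuous_snd).prodMk (this.comp continuous_fst)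
  set G : (Fin 1 → ℂ) × (Fin 1 → ℂ) → ℂ := fun p => starRingEnd ℂ (F (σ p)) with hGdef
  have hF0 : F 0 = 0 := hnorm.self_of_nhds.1
  have hG0 : G 0 = 0 := by simp [hGdef, hσ0, hF0]
  have hFσ : AnalyticAt ℂ F (σ 0) := by rwa [hσ0]
  have hΦG : ∀ᶠ p in 𝓝 0, Φ (p, G p) = 0 := by
    have hc : ContinuousAt (fun p : (Fin 1 → ℂ) × (Fin 1 → ℂ) => (p.1, p.2, (0 : ℂ))) 0 := by
      fun_prop
    filter_upwards [hc.eventually hreal] with p hp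
    simpa [QBar] using hp
  have hG : AnalyticAt ℂ G 0 := by
    refine analyticAt_of_implicit hΦ hΦd ?_ hG0 hΦG
    exact continuous_conj.continuousAt.comp
      (ContinuousAt.comp (f := σ) hFσ.continuousAt hσc.continuousAt)
  have hGF : ∀ j k, listDeriv (dirList j k) G 0 =
      starRingEnd ℂ (listDeriv (dirList k j) F 0) := by
    intro j k
    rw [listDeriv_conj hσadd hσsmul hσc _ hFσ hG, hσ0,
      listDeriv_perm (map_swap_dirList_perm hσdef j k) hF]
  have hc : ∀ j k, mpd (fun _ => k) (fun χ => mpd (fun _ => j) (fun z => Q z χ 0) 0) 0 /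
      ((j.factorial : ℂ) * (k.factorial : ℂ)) ≠ 0 ↔ listDeriv (dirList j k) F 0 ≠ 0 := by
    intro j k
    rw [← mpd_mpd_eq_listDeriv hF]
    simp [Nat.factorial_ne_zero, hFdef, hΦdef]
  simp only [hc]
  refine lexMin_eq_of_lowest_symm (P := fun j k => listDeriv (dirList j k) F 0 ≠ 0) ?_
  intro j k hlow
  have hgraph := listDeriv_graph_of_vanish (dirList j k) hΦ hG hG0 fun L hL hne => by
    obtain ⟨j', k', hj', hk', rfl⟩ := exists_of_sublist_dirList hL
    have h := hlow j' k' hj' hk' fun h => hne (by simp_all)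
    rw [hGF, not_not.1 h, map_zero]
  rw [(listDeriv_congr (G := fun _ => 0) _ hΦG).eq_of_nhds, listDeriv_zero, hΦd, hGF] at hgraph
  have hsum : listDeriv (dirList j k) F 0 + starRingEnd ℂ (listDeriv (dirList k j) F 0) = 0 := by
    simpa using hgraph.symm
  rw [eq_neg_of_add_eq_zero_left hsum]
  simp

end HSPMpaper
end
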